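/- arXiv:0812.2084 — 7 statements merged into one kernel-verified Lean document; each statement's English description precedes it below -/
import Mathlib

section
/- Geometric-decay consequence of the acausal Gronwall inequality: Let γ > 0 and 0 < α < γ. Then there exist η₀ = η₀(γ, α) > 0 and C = C(γ, α) > 0 such that: for every 0 < η ≤ η₀, every β ≥ 0, and every bounded sequence (x_k)_{k≥0} of nonnegative real numbers satisfying x_k ≤ β · 2^{−αk} + η · ∑_{l=0}^∞ 2^{−γ|k−l|} x_l for all k ≥ 0, one has x_k ≤ C · β · 2^{−αk} for all k ≥ 0. -/
/-!
Write `r = 2 ^ (-α)`, let `ε > 0` and put `w k = r ^ k + ε`. This weight varies slowly: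
`w l ≤ 2 ^ (α |k - l|) w k`. Hence the kernel `2 ^ (-γ |k - l|)` maps `w` to a sequence bounded
by `S w`, where `S = ∑ 2 ^ (-(γ - α) |n|)` over `n : ℤ` (`summable_kernel`, `tsum_kernel_le`).
Since `w ≥ ε` and `x` is bounded, `A = sup x / w` is finite; this is what the shift by `ε` is for.
The hypothesis gives `x ≤ (β + η S A) w`, so `A ≤ β + A / 2` as soon as `η S ≤ 1 / 2`, that is
`x ≤ 2 β w`. Letting `ε → 0` gives the theorem with `C = 2` and `η₀ = 1 / (2 S)`.
-/

open scoped BigOperators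

theorem summable_kernel_int {δ : ℝ} (hδ : 0 < δ) :
    Summable fun n : ℤ => (2 : ℝ) ^ (-(δ * |(n : ℝ)|)) := by
  have h : Summable fun n : ℕ => (2 : ℝ) ^ (-(δ * (n : ℝ))) := by
    have hg : Summable fun n : ℕ => ((2 : ℝ) ^ (-δ)) ^ n :=
      summable_geometric_of_lt_one (by positivity)
        (Real.rpow_lt_one_of_one_lt_of_neg one_lt_two (by linarith))
    refine hg.congr fun n => ?_
    rw [← Real.rpow_natCast, ← Real.rpow_mul (by norm_num), neg_mul]
  refine Summable.of_nat_of_neg ?_ ?_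
  · simpa using h
  · simpa using h

theorem sub_natCast_injective (k : ℕ) : Function.Injective fun l : ℕ => (k : ℤ) - (l : ℤ) := by
  intro a b h
  simp only at h
  omega

theorem summable_kernel {δ : ℝ} (hδ : 0 < δ) (k : ℕ) :
    Summable fun l : ℕ => (2 : ℝ) ^ (-(δ * |(k : ℝ) - (l : ℝ)|)) := by
  simpa [Function.comp_def] using
    (summable_kernel_int hδ).comp_injective (sub_natCast_injective k)

theorem tsum_kernel_le {δ : ℝ} (hδ : 0 < δ) (k : ℕ) :
    ∑' l : ℕ, (2 : ℝ) ^ (-(δ * |(k : ℝ) - (l : ℝ)|)) ≤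
      ∑' n : ℤ, (2 : ℝ) ^ (-(δ * |(n : ℝ)|)) := by
  simpa [Function.comp_def] using
    tsum_comp_le_tsum_of_inj (summable_kernel_int hδ) (fun n => by positivity)
      (sub_natCast_injective k)

/-- The weight `2 ^ (-α k) + ε` grows by at most the factor `2 ^ (α |k - l|)` from `k` to `l`, so
multiplying by it only lowers the decay rate of the kernel from `γ` to `γ - α`. -/
theorem kernel_mul_weight_le {γ α ε : ℝ} (hα : 0 < α) (hε : 0 < ε) (k l : ℕ) :
    (2 : ℝ) ^ (-(γ * |(k : ℝ) - (l : ℝ)|)) * (2 ^ (-(α * (l : ℝ))) + ε) ≤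
      2 ^ (-((γ - α) * |(k : ℝ) - (l : ℝ)|)) * (2 ^ (-(α * (k : ℝ))) + ε) := by
  rw [mul_add, mul_add, ← Real.rpow_add two_pos, ← Real.rpow_add two_pos]
  have h₁ : α * ((k : ℝ) - l) ≤ α * |(k : ℝ) - l| :=
    mul_le_mul_of_nonneg_left (le_abs_self _) hα.le
  have h₂ : 0 ≤ α * |(k : ℝ) - l| := by positivity
  refine add_le_add (Real.rpow_le_rpow_of_exponent_le one_le_two (by linarith))
    (mul_le_mul_of_nonneg_right (Real.rpow_le_rpow_of_exponent_le one_le_two (by linarith)) hε.le)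

/-- The decay estimate up to an additive error `ε`. -/
theorem le_two_mul_weight {γ α η β ε M : ℝ} (hα : 0 < α) (hαγ : α < γ) (hη : 0 < η)
    (hηS : η * ∑' n : ℤ, (2 : ℝ) ^ (-((γ - α) * |(n : ℝ)|)) ≤ 1 / 2)
    (hβ : 0 ≤ β) (hε : 0 < ε) {x : ℕ → ℝ} (hx : ∀ k, 0 ≤ x k) (hM : ∀ k, x k ≤ M)
    (h : ∀ k : ℕ, x k ≤ β * 2 ^ (-(α * (k : ℝ))) +
      η * ∑' l : ℕ, 2 ^ (-(γ * |(k : ℝ) - (l : ℝ)|)) * x l) (k : ℕ) :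
    x k ≤ 2 * β * (2 ^ (-(α * (k : ℝ))) + ε) := by
  have hδ : 0 < γ - α := by linarith
  set S := ∑' n : ℤ, (2 : ℝ) ^ (-((γ - α) * |(n : ℝ)|))
  have hr : ∀ k : ℕ, (0 : ℝ) < 2 ^ (-(α * (k : ℝ))) := fun k => by positivity
  have hw : ∀ k : ℕ, (0 : ℝ) < 2 ^ (-(α * (k : ℝ))) + ε := fun k => by positivity
  have hbdd : BddAbove (Set.range fun k : ℕ => x k / (2 ^ (-(α * (k : ℝ))) + ε)) := by
    refine ⟨M / ε, ?_⟩
    rintro _ ⟨k, rfl⟩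
    have hM0 : 0 ≤ M := (hx k).trans (hM k)
    exact div_le_div₀ hM0 (hM k) hε (by linarith [hr k])
  set A := ⨆ k : ℕ, x k / (2 ^ (-(α * (k : ℝ))) + ε) with hA
  have hxA : ∀ k : ℕ, x k ≤ A * (2 ^ (-(α * (k : ℝ))) + ε) := fun k =>
    (div_le_iff₀ (hw k)).1 (le_ciSup hbdd k)
  have hA0 : 0 ≤ A := Real.iSup_nonneg fun k => div_nonneg (hx k) (hw k).le
  have hsum : ∀ k : ℕ, ∑' l : ℕ, (2 : ℝ) ^ (-(γ * |(k : ℝ) - (l : ℝ)|)) * x l ≤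
      S * (A * (2 ^ (-(α * (k : ℝ))) + ε)) := by
    intro k
    have hle : ∀ l : ℕ, (2 : ℝ) ^ (-(γ * |(k : ℝ) - (l : ℝ)|)) * x l ≤
        2 ^ (-((γ - α) * |(k : ℝ) - (l : ℝ)|)) * (A * (2 ^ (-(α * (k : ℝ))) + ε)) := by
      intro l
      calc (2 : ℝ) ^ (-(γ * |(k : ℝ) - (l : ℝ)|)) * x l
          ≤ 2 ^ (-(γ * |(k : ℝ) - (l : ℝ)|)) * (A * (2 ^ (-(α * (l : ℝ))) + ε)) := by
            gcongr
            exact hxA l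
        _ = A * (2 ^ (-(γ * |(k : ℝ) - (l : ℝ)|)) * (2 ^ (-(α * (l : ℝ))) + ε)) := by ring
        _ ≤ A * (2 ^ (-((γ - α) * |(k : ℝ) - (l : ℝ)|)) * (2 ^ (-(α * (k : ℝ))) + ε)) :=
            mul_le_mul_of_nonneg_left (kernel_mul_weight_le hα hε k l) hA0
        _ = _ := by ring
    have hs := (summable_kernel hδ k).mul_right (A * (2 ^ (-(α * (k : ℝ))) + ε))
    calc _ ≤ _ := (hs.of_nonneg_of_le (fun l => mul_nonneg (by positivity) (hx l)) hle).tsum_le_tsum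
            hle hs
      _ = _ := tsum_mul_right
      _ ≤ _ := mul_le_mul_of_nonneg_right (tsum_kernel_le hδ k) (mul_nonneg hA0 (hw k).le)
  have hA2 : A ≤ β + A / 2 := by
    refine ciSup_le fun k => (div_le_iff₀ (hw k)).2 ?_
    have h₁ := mul_le_mul_of_nonneg_left (hsum k) hη.le
    have h₂ := mul_le_mul_of_nonneg_right hηS (mul_nonneg hA0 (hw k).le)
    have h₃ := mul_nonneg hβ hε.le
    linarith [h k]
  exact (hxA k).trans (mul_le_mul_of_nonneg_right (by linarith) (hw k).le)

/-- Geometric-decay consequence of the acausal Gronwall inequality. -/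
theorem gronwall_geometric_decay (γ α : ℝ) (hγ : 0 < γ) (hα : 0 < α) (hαγ : α < γ) :
    ∃ η₀ C : ℝ, 0 < η₀ ∧ 0 < C ∧
      ∀ η : ℝ, 0 < η → η ≤ η₀ →
      ∀ β : ℝ, 0 ≤ β →
      ∀ x : ℕ → ℝ,
        (∀ k, 0 ≤ x k) → (∃ M : ℝ, ∀ k, x k ≤ M) →
        (∀ k : ℕ,
          x k ≤ β * 2 ^ (-(α * (k : ℝ))) +
            η * ∑' l : ℕ, 2 ^ (-(γ * |(k : ℝ) - (l : ℝ)|)) * x l) →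
        ∀ k : ℕ, x k ≤ C * β * 2 ^ (-(α * (k : ℝ))) := by
  have hS : 0 < ∑' n : ℤ, (2 : ℝ) ^ (-((γ - α) * |(n : ℝ)|)) :=
    (summable_kernel_int (sub_pos.2 hαγ)).tsum_pos (fun n => by positivity) 0 (by positivity)
  refine ⟨1 / 2 / ∑' n : ℤ, (2 : ℝ) ^ (-((γ - α) * |(n : ℝ)|)), 2, by positivity, two_pos, ?_⟩
  rintro η hη hη₀ β hβ x hx ⟨M, hM⟩ h k
  have key := fun ε (hε : 0 < ε) =>
    le_two_mul_weight hα hαγ hη ((le_div_iff₀ hS).1 hη₀) hβ hε hx hM h k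
  -- Apply `key` with an `ε` for which the error term `2 * β * ε` is at most `t`.
  refine le_of_forall_pos_le_add fun t ht => ?_
  have hb : 0 < 2 * β + 1 := by linarith
  have h₁ := key (t / (2 * β + 1)) (by positivity)
  have h₂ : 2 * β * (t / (2 * β + 1)) ≤ t := by
    rw [mul_div_assoc', div_le_iff₀ hb]
    linarith
  linarith
end

section
/- Pointwise square-function estimate for Hölder nonlinearities: Let d ≥ 1, 0 < p < 1, 0 < σ < 1, and 0 < s < σp. Let G : ℂ → ℂ be Hölder continuous of order p with constant L, and let u, v, w : ℝ^d → ℂ be measurable. Then there is a constant C = C(d, p, s, σ) such that for almost every x ∈ ℝ^d, D_s( w · (G∘(u+v) − G∘u) )(x) ≤ C·L·[ D_s(w)(x) · |v(x)|^p + ( M(|w|^{1/(1−p)})(x) )^{1−p} · ( M(|v|)(x) )^{p − s/σ} · ( D_σ(u+v)(x) + D_σ(u)(x) )^{s/σ} ]. -/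
/-!
Write `H = G ∘ (u + v) - G ∘ u`, so that
`(w H)(z) - (w H)(x) = (w z - w x) H(x) + w z (H z - H x)`. Since `|H(x)| ≤ L |v(x)| ^ p`, the first
term contributes `L |v(x)| ^ p D_s(w)(x)`.

For the second term, the Hölder condition bounds `|H z - H x|` in two ways: by
`2 L (|v z| + |v x|) ^ p`, and by `2 L (|(u + v) z - (u + v) x| + |u z - u x|) ^ p`. Hölder's
inequality with exponents `1 / (1 - p)` and `1 / p` on the unit ball in `y`, with `z = x + r y`,
splits off a multiple of `M(|w| ^ (1 / (1 - p)))(x) ^ (1 - p)` (`lintegral_mul_rpow_le`), and leaves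
the `p`-th power of an average which is bounded

* by a multiple `N` of `M(|v|)(x)`, as `|v(x)| ≤ M(|v|)(x)` for almost every `x` (`ae_le_maxFn`);
* by `r ^ σ D`, where `D` is a multiple of `D_σ(u + v)(x) + D_σ(u)(x)`, because the inner integrals
  of the square function are almost monotone in the scale (`lintegral_diff_le_sqFn`).

Finally `∫ min(N, r ^ σ D) ^ (2 p) dr / r ^ (1 + 2 s)` is split at the scale where
`r ^ σ D = N`; as `0 < s < σ p`, both pieces are multiples of
`N ^ (2 (p - s / σ)) D ^ (2 s / σ)` (`lintegral_min_le_real`, `lintegral_mul_min_le`).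
-/

open MeasureTheory ENNReal

/-- Strichartz's square function `D_s f(x)`, valued in `[0,∞]`. -/
noncomputable def sqFn (d : ℕ) (s : ℝ) (f : EuclideanSpace ℝ (Fin d) → ℂ)
    (x : EuclideanSpace ℝ (Fin d)) : ℝ≥0∞ :=
  (∫⁻ r in Set.Ioi (0 : ℝ),
      (∫⁻ y in Metric.ball (0 : EuclideanSpace ℝ (Fin d)) 1,
          (‖f (x + r • y) - f x‖₊ : ℝ≥0∞)) ^ 2
        / ENNReal.ofReal (r ^ (1 + 2 * s))) ^ (1 / 2 : ℝ)

/-- The Hardy--Littlewood maximal function, valued in `[0,∞]`. -/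
noncomputable def maxFn (d : ℕ) (f : EuclideanSpace ℝ (Fin d) → ℝ≥0∞)
    (x : EuclideanSpace ℝ (Fin d)) : ℝ≥0∞ :=
  ⨆ (ρ : ℝ) (_ : 0 < ρ), (volume (Metric.ball x ρ))⁻¹ * ∫⁻ y in Metric.ball x ρ, f y

/-! ### Averages over balls and the maximal function -/

theorem lintegral_ball_comp (d : ℕ) (F : EuclideanSpace ℝ (Fin d) → ℝ≥0∞)
    (x : EuclideanSpace ℝ (Fin d)) {r : ℝ} (hr : 0 < r) :
    ∫⁻ y in Metric.ball (0 : EuclideanSpace ℝ (Fin d)) 1, F (x + r • y) =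
      (ENNReal.ofReal (r ^ d))⁻¹ * ∫⁻ z in Metric.ball x r, F z := by
  have hpre : (fun y : EuclideanSpace ℝ (Fin d) => x + r • y) ⁻¹' Metric.ball x r =
      Metric.ball 0 1 := by
    ext y
    simp [norm_smul, abs_of_pos hr, hr]
  have hemb1 : MeasurableEmbedding (fun y : EuclideanSpace ℝ (Fin d) => r • y) :=
    measurableEmbedding_const_smul₀ hr.ne'
  have hemb2 : MeasurableEmbedding (fun y : EuclideanSpace ℝ (Fin d) => x + y) :=
    measurableEmbedding_addLeft x
  have hemb : MeasurableEmbedding (fun y : EuclideanSpace ℝ (Fin d) => x + r • y) :=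
    hemb2.comp hemb1
  have hmap : Measure.map (fun y : EuclideanSpace ℝ (Fin d) => x + r • y) volume =
      (ENNReal.ofReal (r ^ d))⁻¹ • volume := by
    have : (fun y : EuclideanSpace ℝ (Fin d) => x + r • y) = (fun y => x + y) ∘ (fun y => r • y) :=
      rfl
    rw [this, ← Measure.map_map hemb2.measurable hemb1.measurable,
      Measure.map_addHaar_smul _ hr.ne', Measure.map_smul, map_add_left_eq_self,
      finrank_euclideanSpace_fin, abs_of_pos (by positivity),
      ENNReal.ofReal_inv_of_pos (by positivity)]
  rw [← hpre, ← hemb.lintegral_map (μ := volume.restrict _), ← hemb.restrict_map, hmap,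
    Measure.restrict_smul, lintegral_smul_measure, smul_eq_mul]

/-- An average over a ball centred at `x`, in rescaled form, is at most the maximal function. -/
theorem lintegral_ball_comp_le_maxFn (d : ℕ) (F : EuclideanSpace ℝ (Fin d) → ℝ≥0∞)
    (x : EuclideanSpace ℝ (Fin d)) {r : ℝ} (hr : 0 < r) :
    ∫⁻ y in Metric.ball (0 : EuclideanSpace ℝ (Fin d)) 1, F (x + r • y) ≤
      volume (Metric.ball (0 : EuclideanSpace ℝ (Fin d)) 1) * maxFn d F x := by
  have hV0 : volume (Metric.ball (0 : EuclideanSpace ℝ (Fin d)) 1) ≠ 0 :=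
    (Metric.measure_ball_pos _ _ one_pos).ne'
  have hVt : volume (Metric.ball (0 : EuclideanSpace ℝ (Fin d)) 1) ≠ ∞ := measure_ball_lt_top.ne
  have hle : (volume (Metric.ball x r))⁻¹ * ∫⁻ y in Metric.ball x r, F y ≤ maxFn d F x :=
    le_iSup₂ (f := fun (ρ : ℝ) (_ : 0 < ρ) =>
      (volume (Metric.ball x ρ))⁻¹ * ∫⁻ y in Metric.ball x ρ, F y) r hr
  rw [lintegral_ball_comp d F x hr]
  refine le_trans (le_of_eq ?_) (mul_le_mul_right hle _)
  rw [Measure.addHaar_ball_of_pos _ x hr, finrank_euclideanSpace_fin,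
    ENNReal.mul_inv (Or.inr hVt) (Or.inr hV0), ← mul_assoc, mul_left_comm,
    ENNReal.mul_inv_cancel hV0 hVt, mul_one]

/-- Hölder's inequality at one scale, with the factor `W` absorbed into its maximal function. -/
theorem lintegral_mul_rpow_le (d : ℕ) {p : ℝ} (hp : 0 < p) (hp1 : p < 1)
    {W g : EuclideanSpace ℝ (Fin d) → ℝ≥0∞} (hW : Measurable W) (hg : Measurable g)
    (x : EuclideanSpace ℝ (Fin d)) {r : ℝ} (hr : 0 < r) :
    ∫⁻ y in Metric.ball (0 : EuclideanSpace ℝ (Fin d)) 1, W (x + r • y) * g (x + r • y) ^ p ≤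
      (volume (Metric.ball (0 : EuclideanSpace ℝ (Fin d)) 1) *
          maxFn d (fun z => W z ^ (1 / (1 - p))) x) ^ (1 - p) *
        (∫⁻ y in Metric.ball (0 : EuclideanSpace ℝ (Fin d)) 1, g (x + r • y)) ^ p := by
  have h1p : 0 < 1 - p := by linarith
  have hφ : Measurable (fun y : EuclideanSpace ℝ (Fin d) => x + r • y) := by fun_prop
  have hpq : (1 / (1 - p)).HolderConjugate (1 / p) := by
    have := Real.HolderConjugate.inv_inv h1p hp (by ring)
    simpa [one_div] using this
  have h := ENNReal.lintegral_mul_le_Lp_mul_Lq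
    (volume.restrict (Metric.ball (0 : EuclideanSpace ℝ (Fin d)) 1)) hpq
    (hW.comp hφ).aemeasurable ((hg.comp hφ).pow_const p).aemeasurable
  simp only [Pi.mul_apply, Function.comp, one_div_one_div, ← ENNReal.rpow_mul,
    mul_one_div_cancel hp.ne', ENNReal.rpow_one] at h
  refine h.trans (mul_le_mul_left (ENNReal.rpow_le_rpow ?_ h1p.le) _)
  exact lintegral_ball_comp_le_maxFn d (fun z => W z ^ (1 / (1 - p))) x hr

/-- No local integrability is assumed: Lebesgue differentiation is applied to the truncations
`min f n` restricted to the balls `B(0, n)`. -/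
theorem ae_le_maxFn (d : ℕ) (hd : 1 ≤ d) (f : EuclideanSpace ℝ (Fin d) → ℝ≥0∞)
    (hf : Measurable f) (hfin : ∀ x, f x ≠ ∞) :
    ∀ᵐ x ∂(volume : Measure (EuclideanSpace ℝ (Fin d))), f x ≤ maxFn d f x := by
  have : Nonempty (Fin d) := ⟨⟨0, hd⟩⟩
  set g : ℕ → EuclideanSpace ℝ (Fin d) → ℝ≥0∞ := fun n =>
    (Metric.ball 0 (n : ℝ)).indicator (fun x => min (f x) n) with hg
  have hgm : ∀ n, Measurable (g n) := fun n =>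
    (hf.min measurable_const).indicator measurableSet_ball
  have hgint : ∀ n, ∫⁻ x, g n x ≠ ∞ := by
    intro n
    rw [hg, lintegral_indicator measurableSet_ball]
    refine ne_top_of_le_ne_top ?_ (lintegral_mono (g := fun _ => (n : ℝ≥0∞))
      (fun x => min_le_right _ _))
    rw [setLIntegral_const]
    exact ENNReal.mul_ne_top (by simp) measure_ball_lt_top.ne
  have hgf : ∀ n x, g n x ≤ f x := by
    intro n x
    simp only [hg]
    exact (Set.indicator_le_self _ _ _).trans (min_le_left _ _)
  have hae := ae_all_iff.2 fun n =>
    (Besicovitch.vitaliFamily (volume : Measure (EuclideanSpace ℝ (Fin d)))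
      ).ae_tendsto_lintegral_div (hgm n).aemeasurable (hgint n)
  filter_upwards [hae] with x hx
  have key : ∀ n, g n x ≤ maxFn d f x := by
    intro n
    refine le_of_tendsto ((hx n).comp (Besicovitch.tendsto_filterAt volume x)) ?_
    filter_upwards [self_mem_nhdsWithin] with r hr
    have hr : 0 < r := hr
    have hb : (Metric.ball x r : Set (EuclideanSpace ℝ (Fin d))) =ᵐ[volume]
        Metric.closedBall x r :=
      ae_eq_of_subset_of_measure_ge Metric.ball_subset_closedBall
        (Measure.addHaar_closedBall_eq_addHaar_ball _ x r).le
        measurableSet_ball.nullMeasurableSet measure_closedBall_lt_top.ne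
    simp only [Function.comp]
    rw [← setLIntegral_congr hb, ← measure_congr hb, ENNReal.div_eq_inv_mul]
    exact (mul_le_mul_right (lintegral_mono (hgf n)) _).trans
      (le_iSup₂ (f := fun (ρ : ℝ) (_ : 0 < ρ) =>
      (volume (Metric.ball x ρ))⁻¹ * ∫⁻ y in Metric.ball x ρ, f y) r hr)
  obtain ⟨n, hn⟩ := exists_nat_gt (max ‖x‖ (f x).toReal)
  have h1 : g n x = f x := by
    have hxn : x ∈ Metric.ball (0 : EuclideanSpace ℝ (Fin d)) (n : ℝ) := by
      simpa using (le_max_left _ _).trans_lt hn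
    simp only [hg, Set.indicator_of_mem hxn]
    refine min_eq_left ?_
    rw [← ENNReal.ofReal_toReal (hfin x), ← ENNReal.ofReal_natCast]
    exact ENNReal.ofReal_le_ofReal ((le_max_right _ _).trans hn.le)
  exact h1 ▸ key n

/-! ### One scale against the square function -/

/-- A single scale is controlled by the whole square function: `r ^ d` times the inner integral at
scale `r` is an integral over `B(x, r)`, hence nondecreasing in `r`, so the scales `t ∈ (r, 2r]`
already contribute a multiple of the square of the left-hand side to `sqFn d σ f x ^ 2`. -/
theorem lintegral_diff_le_sqFn (d : ℕ) (σ : ℝ) (hσ : 0 < σ)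
    (f : EuclideanSpace ℝ (Fin d) → ℂ) (x : EuclideanSpace ℝ (Fin d)) {r : ℝ} (hr : 0 < r) :
    ∫⁻ y in Metric.ball (0 : EuclideanSpace ℝ (Fin d)) 1, (‖f (x + r • y) - f x‖₊ : ℝ≥0∞) ≤
      ENNReal.ofReal (2 ^ d * 2 ^ ((1 + 2 * σ) / 2)) * (ENNReal.ofReal (r ^ σ) * sqFn d σ f x) := by
  set F : EuclideanSpace ℝ (Fin d) → ℝ≥0∞ := fun z => (‖f z - f x‖₊ : ℝ≥0∞) with hF
  set I : ℝ → ℝ≥0∞ := fun t =>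
    ∫⁻ y in Metric.ball (0 : EuclideanSpace ℝ (Fin d)) 1, F (x + t • y) with hI
  have hmono : ∀ t ∈ Set.Ioc r (2 * r), I r ≤ ENNReal.ofReal (2 ^ d) * I t := by
    intro t ht
    have ht0 : 0 < t := hr.trans ht.1
    simp only [hI]
    rw [lintegral_ball_comp d F x hr, lintegral_ball_comp d F x ht0, ← mul_assoc]
    refine mul_le_mul' ?_ (lintegral_mono_set (Metric.ball_subset_ball ht.1.le))
    rw [← ENNReal.ofReal_inv_of_pos (by positivity), ← ENNReal.ofReal_inv_of_pos (by positivity),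
      ← ENNReal.ofReal_mul (by positivity)]
    refine ENNReal.ofReal_le_ofReal ?_
    rw [← div_eq_mul_inv, le_div_iff₀ (by positivity), inv_mul_le_iff₀ (by positivity), ← mul_pow]
    exact pow_le_pow_left₀ ht0.le (by linarith [ht.2]) _
  have hsq : sqFn d σ f x ^ 2 =
      ∫⁻ t in Set.Ioi (0 : ℝ), I t ^ 2 / ENNReal.ofReal (t ^ (1 + 2 * σ)) := by
    simp only [sqFn, hI, hF]
    rw [← ENNReal.rpow_natCast, ← ENNReal.rpow_mul]
    norm_num
  have hlow : (I r ^ 2 / ENNReal.ofReal ((2 ^ d) ^ 2 * (2 * r) ^ (1 + 2 * σ))) *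
      ENNReal.ofReal r ≤ sqFn d σ f x ^ 2 := by
    rw [hsq]
    have hvol : volume (Set.Ioc r (2 * r)) = ENNReal.ofReal r := by
      rw [Real.volume_Ioc]; congr 1; ring
    rw [← hvol, ← setLIntegral_const]
    refine (setLIntegral_mono' measurableSet_Ioc ?_).trans
      (lintegral_mono_set (fun t ht => hr.trans ht.1))
    intro t ht
    have ht0 : 0 < t := hr.trans ht.1
    rw [ENNReal.ofReal_mul (by positivity), ENNReal.ofReal_pow (by positivity)]
    refine ENNReal.div_le_of_le_mul ?_
    have h1 : ENNReal.ofReal (t ^ (1 + 2 * σ)) ≤ ENNReal.ofReal ((2 * r) ^ (1 + 2 * σ)) :=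
      ENNReal.ofReal_le_ofReal (Real.rpow_le_rpow ht0.le ht.2 (by linarith))
    have h0 : ENNReal.ofReal (t ^ (1 + 2 * σ)) ≠ 0 := by
      simpa using Real.rpow_pos_of_pos ht0 _
    calc I r ^ 2 ≤ (ENNReal.ofReal (2 ^ d) * I t) ^ 2 := pow_le_pow_left' (hmono t ht) 2
      _ = I t ^ 2 / ENNReal.ofReal (t ^ (1 + 2 * σ)) *
          (ENNReal.ofReal (2 ^ d) ^ 2 * ENNReal.ofReal (t ^ (1 + 2 * σ))) := by
        rw [mul_left_comm, ENNReal.div_mul_cancel h0 ENNReal.ofReal_ne_top, mul_pow]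
      _ ≤ _ := by gcongr
  have hc : (2:ℝ) ^ d * 2 ^ ((1 + 2 * σ) / 2) * r ^ σ =
      ((2 ^ d) ^ 2 * (2 * r) ^ (1 + 2 * σ) / r) ^ (1 / 2 : ℝ) := by
    have : (2 ^ d) ^ 2 * (2 * r) ^ (1 + 2 * σ) / r =
        ((2:ℝ) ^ d * 2 ^ ((1 + 2 * σ) / 2) * r ^ σ) ^ 2 := by
      rw [Real.mul_rpow (by norm_num) hr.le, Real.rpow_add hr, Real.rpow_one, mul_pow, mul_pow,
        ← Real.rpow_natCast (2 ^ ((1 + 2 * σ) / 2)), ← Real.rpow_mul (by norm_num),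
        ← Real.rpow_natCast (r ^ σ), ← Real.rpow_mul hr.le]
      push_cast
      rw [mul_comm σ 2, div_mul_cancel₀ _ (two_ne_zero)]
      field_simp
    rw [this, ← Real.sqrt_eq_rpow, Real.sqrt_sq (by positivity)]
  rw [← mul_assoc, ← ENNReal.ofReal_mul (by positivity), hc]
  have hA : 0 < (2 ^ d) ^ 2 * (2 * r) ^ (1 + 2 * σ) := by positivity
  have hr0 : ENNReal.ofReal r ≠ 0 := by simpa using hr
  have hI2 : I r ^ 2 ≤ ENNReal.ofReal ((2 ^ d) ^ 2 * (2 * r) ^ (1 + 2 * σ) / r) *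
      sqFn d σ f x ^ 2 := by
    refine le_trans (le_of_eq ?_) (mul_le_mul_right hlow _)
    rw [ENNReal.ofReal_div_of_pos hr, mul_comm (_ / _) (ENNReal.ofReal r), ← mul_assoc,
      ENNReal.div_mul_cancel hr0 ENNReal.ofReal_ne_top,
      ENNReal.mul_div_cancel (by simpa using hA) ENNReal.ofReal_ne_top]
  have := ENNReal.rpow_le_rpow hI2 (show (0:ℝ) ≤ 1 / 2 by norm_num)
  rw [ENNReal.mul_rpow_of_nonneg _ _ (by norm_num), ← ENNReal.rpow_natCast, ← ENNReal.rpow_natCast,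
    ← ENNReal.rpow_mul, ← ENNReal.rpow_mul,
    ENNReal.ofReal_rpow_of_pos (by positivity)] at this
  simpa using this

/-! ### The interpolating integral over scales -/

theorem lintegral_Ioc_rpow_eq {a R : ℝ} (ha : -1 < a) (hR : 0 < R) :
    ∫⁻ r in Set.Ioc 0 R, ENNReal.ofReal (r ^ a) = ENNReal.ofReal (R ^ (a + 1) / (a + 1)) := by
  have hint : IntegrableOn (fun r : ℝ => r ^ a) (Set.Ioc 0 R) :=
    (intervalIntegral.intervalIntegrable_rpow' ha).1
  rw [← ofReal_integral_eq_lintegral_ofReal hint ((ae_restrict_mem measurableSet_Ioc).mono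
    fun r hr => Real.rpow_nonneg (le_of_lt hr.1) _), ← intervalIntegral.integral_of_le hR.le,
    integral_rpow (Or.inl ha), Real.zero_rpow (by linarith), sub_zero]

theorem lintegral_Ioi_rpow_eq {a R : ℝ} (ha : a < -1) (hR : 0 < R) :
    ∫⁻ r in Set.Ioi R, ENNReal.ofReal (r ^ a) = ENNReal.ofReal (-R ^ (a + 1) / (a + 1)) := by
  rw [← ofReal_integral_eq_lintegral_ofReal (integrableOn_Ioi_rpow_of_lt ha hR)
    ((ae_restrict_mem measurableSet_Ioi).mono
    fun r hr => Real.rpow_nonneg (hR.trans hr).le _), integral_Ioi_rpow_of_lt ha hR]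

/-- The scale integral behind the interpolation between `N` (large scales) and `r ^ σ * D`
(small scales). It converges at `0` because `s < σ * p` and at `∞` because `0 < s`. -/
theorem lintegral_min_le_real (p σ s : ℝ) (hp : 0 < p) (hσ : 0 < σ) (hs : 0 < s)
    (hsσp : s < σ * p) {N D : ℝ} (hN : 0 < N) (hD : 0 < D) :
    ∫⁻ r in Set.Ioi (0 : ℝ), ENNReal.ofReal ((min N (r ^ σ * D) ^ p) ^ 2 / r ^ (1 + 2 * s)) ≤
      ENNReal.ofReal ((1 / (2 * σ * p - 2 * s) + 1 / (2 * s)) *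
        (N ^ (p - s / σ) * D ^ (s / σ)) ^ 2) := by
  have hδ : 0 < 2 * σ * p - 2 * s := by nlinarith
  -- the two bounds balance at the scale where `R ^ σ * D = N`
  set R : ℝ := (N / D) ^ (1 / σ) with hRdef
  have hR : 0 < R := by positivity
  have h1 : (D ^ p) ^ 2 * R ^ (2 * σ * p - 2 * s) = (N ^ (p - s / σ) * D ^ (s / σ)) ^ 2 := by
    rw [hRdef, ← Real.rpow_mul (by positivity), Real.div_rpow hN.le hD.le]
    have : 1 / σ * (2 * σ * p - 2 * s) = (p - s / σ) + (p - s / σ) := by field_simp; ring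
    rw [this, Real.rpow_add hN, Real.rpow_add hD]
    have h2 : D ^ p = D ^ (p - s / σ) * D ^ (s / σ) := by
      rw [← Real.rpow_add hD]; congr 1; ring
    rw [h2]
    field_simp
  have h2 : (N ^ p) ^ 2 * R ^ (-(2 * s)) = (N ^ (p - s / σ) * D ^ (s / σ)) ^ 2 := by
    rw [hRdef, ← Real.rpow_mul (by positivity)]
    have : 1 / σ * -(2 * s) = - (s / σ + s / σ) := by field_simp; ring
    rw [this, Real.rpow_neg (by positivity), Real.div_rpow hN.le hD.le, Real.rpow_add hN,
      Real.rpow_add hD]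
    have h2 : N ^ p = N ^ (p - s / σ) * N ^ (s / σ) := by
      rw [← Real.rpow_add hN]; congr 1; ring
    rw [h2]
    field_simp
  rw [← Set.Ioc_union_Ioi_eq_Ioi hR.le]
  refine (lintegral_union_le _ _ _).trans ?_
  rw [add_mul, ENNReal.ofReal_add (by positivity) (by positivity)]
  refine add_le_add ?_ ?_
  · calc _ ≤ ∫⁻ r in Set.Ioc 0 R, ENNReal.ofReal ((D ^ p) ^ 2) *
          ENNReal.ofReal (r ^ (2 * σ * p - 2 * s - 1)) := by
          refine setLIntegral_mono' measurableSet_Ioc fun r hr => ?_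
          have hr0 : 0 < r := hr.1
          rw [← ENNReal.ofReal_mul (by positivity)]
          refine ENNReal.ofReal_le_ofReal ?_
          rw [div_le_iff₀ (by positivity), mul_assoc, ← Real.rpow_add hr0]
          have : 2 * σ * p - 2 * s - 1 + (1 + 2 * s) = σ * p + σ * p := by ring
          rw [this, Real.rpow_add hr0, Real.rpow_mul hr0.le, ← sq, ← mul_pow,
            ← Real.mul_rpow (by positivity) (by positivity), mul_comm D]
          have := min_le_right N (r ^ σ * D)
          gcongr
      _ = _ := by
          rw [lintegral_const_mul' _ _ ENNReal.ofReal_ne_top,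
            lintegral_Ioc_rpow_eq (by linarith) hR, ← ENNReal.ofReal_mul (by positivity), ← h1,
            sub_add_cancel]
          congr 1; ring
  · calc _ ≤ ∫⁻ r in Set.Ioi R, ENNReal.ofReal ((N ^ p) ^ 2) *
          ENNReal.ofReal (r ^ (-(1 + 2 * s))) := by
          refine setLIntegral_mono' measurableSet_Ioi fun r hr => ?_
          have hr0 : 0 < r := hR.trans hr
          rw [← ENNReal.ofReal_mul (by positivity)]
          refine ENNReal.ofReal_le_ofReal ?_
          rw [Real.rpow_neg hr0.le, ← div_eq_mul_inv]
          have := min_le_left N (r ^ σ * D)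
          gcongr
      _ = _ := by
          rw [lintegral_const_mul' _ _ ENNReal.ofReal_ne_top,
            lintegral_Ioi_rpow_eq (by linarith) hR, ← ENNReal.ofReal_mul (by positivity), ← h2]
          have : -(1 + 2 * s) + 1 = -(2 * s) := by ring
          rw [this, neg_div_neg_eq]
          congr 1; ring

theorem lintegral_min_le (p σ s : ℝ) (hp : 0 < p) (hσ : 0 < σ) (hs : 0 < s)
    (hsσp : s < σ * p) {N D : ℝ≥0∞} (hN : N ≠ 0) (hNt : N ≠ ∞) (hD : D ≠ 0) (hDt : D ≠ ∞) :
    ∫⁻ r in Set.Ioi (0 : ℝ), ((min N (ENNReal.ofReal (r ^ σ) * D)) ^ p) ^ 2 /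
        ENNReal.ofReal (r ^ (1 + 2 * s)) ≤
      ENNReal.ofReal (1 / (2 * σ * p - 2 * s) + 1 / (2 * s)) *
        (N ^ (p - s / σ) * D ^ (s / σ)) ^ 2 := by
  have hδ : 0 < 2 * σ * p - 2 * s := by nlinarith
  have hsσ : s / σ < p := by rw [div_lt_iff₀ hσ]; linarith
  have hsσ0 : 0 < s / σ := by positivity
  have hn : 0 < N.toReal := ENNReal.toReal_pos hN hNt
  have hd : 0 < D.toReal := ENNReal.toReal_pos hD hDt
  have := lintegral_min_le_real p σ s hp hσ hs hsσp hn hd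
  rw [ENNReal.ofReal_mul (by positivity), ENNReal.ofReal_pow (by positivity),
    ENNReal.ofReal_mul (by positivity), ← ENNReal.ofReal_rpow_of_pos hn,
    ← ENNReal.ofReal_rpow_of_pos hd, ENNReal.ofReal_toReal hNt, ENNReal.ofReal_toReal hDt] at this
  refine le_trans (le_of_eq ?_) this
  refine setLIntegral_congr_fun measurableSet_Ioi fun r hr => ?_
  have hr : 0 < r := hr
  have hmin : 0 < min N.toReal (r ^ σ * D.toReal) := lt_min hn (by positivity)
  rw [ENNReal.ofReal_div_of_pos (by positivity), ENNReal.ofReal_pow (by positivity),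
    ← ENNReal.ofReal_rpow_of_pos hmin, ENNReal.ofReal_min, ENNReal.ofReal_mul (by positivity),
    ENNReal.ofReal_toReal hNt, ENNReal.ofReal_toReal hDt]

/-- The degenerate values `0` and `∞` of the parameters are harmless: a zero parameter annihilates
the integrand, while an infinite one, with no zero parameter, makes the right-hand side infinite. -/
theorem lintegral_mul_min_le (p σ s : ℝ) (hp : 0 < p) (hσ : 0 < σ) (hs : 0 < s)
    (hsσp : s < σ * p) (A N D : ℝ≥0∞) :
    ∫⁻ r in Set.Ioi (0 : ℝ), (A * (min N (ENNReal.ofReal (r ^ σ) * D)) ^ p) ^ 2 /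
        ENNReal.ofReal (r ^ (1 + 2 * s)) ≤
      ENNReal.ofReal (1 / (2 * σ * p - 2 * s) + 1 / (2 * s)) *
        (A * (N ^ (p - s / σ) * D ^ (s / σ))) ^ 2 := by
  have hδ : 0 < 2 * σ * p - 2 * s := by nlinarith
  have hsσ : 0 < p - s / σ := by rw [sub_pos, div_lt_iff₀ hσ]; linarith
  have hsσ0 : 0 < s / σ := by positivity
  have hK : ENNReal.ofReal (1 / (2 * σ * p - 2 * s) + 1 / (2 * s)) ≠ 0 := by
    rw [Ne, ENNReal.ofReal_eq_zero, not_le]; positivity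
  rcases eq_or_ne A 0 with rfl | hA
  · simp
  rcases eq_or_ne N 0 with rfl | hN
  · simp [ENNReal.zero_rpow_of_pos hp]
  rcases eq_or_ne D 0 with rfl | hD
  · simp [ENNReal.zero_rpow_of_pos hp]
  have hN0 : N ^ (p - s / σ) ≠ 0 := by simp [hN, hsσ.not_gt]
  have hD0 : D ^ (s / σ) ≠ 0 := by simp [hD, hsσ0.not_gt]
  rcases eq_or_ne A ∞ with rfl | hAt
  · rw [ENNReal.top_mul (mul_ne_zero hN0 hD0), ENNReal.top_pow two_ne_zero, ENNReal.mul_top hK]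
    exact le_top
  rcases eq_or_ne N ∞ with rfl | hNt
  · rw [ENNReal.top_rpow_of_pos hsσ, ENNReal.top_mul hD0, ENNReal.mul_top hA,
      ENNReal.top_pow two_ne_zero, ENNReal.mul_top hK]
    exact le_top
  rcases eq_or_ne D ∞ with rfl | hDt
  · rw [ENNReal.top_rpow_of_pos hsσ0, ENNReal.mul_top hN0, ENNReal.mul_top hA,
      ENNReal.top_pow two_ne_zero, ENNReal.mul_top hK]
    exact le_top
  simp only [mul_pow A, mul_div_assoc]
  rw [lintegral_const_mul' _ _ (ENNReal.pow_ne_top hAt), mul_left_comm]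
  gcongr
  exact lintegral_min_le p σ s hp hσ hs hsσp hN hNt hD hDt

/-! ### Assembling the estimate -/

/-- `L²` combination in the scale variable of a bound at each scale by two terms. The factor `2`
in place of `1` avoids Minkowski's inequality and the measurability it needs. -/
theorem sqFn_le_of_scale_le (d : ℕ) (s : ℝ) (f w : EuclideanSpace ℝ (Fin d) → ℂ)
    (x : EuclideanSpace ℝ (Fin d)) {c : ℝ≥0∞} (hc : c ≠ ∞) {m : ℝ → ℝ≥0∞} (hm : Measurable m)
    (h : ∀ r : ℝ, 0 < r →
      ∫⁻ y in Metric.ball (0 : EuclideanSpace ℝ (Fin d)) 1, (‖f (x + r • y) - f x‖₊ : ℝ≥0∞) ≤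
        c * (∫⁻ y in Metric.ball (0 : EuclideanSpace ℝ (Fin d)) 1,
          (‖w (x + r • y) - w x‖₊ : ℝ≥0∞)) + m r) :
    sqFn d s f x ≤ 2 * (c * sqFn d s w x +
      (∫⁻ r in Set.Ioi (0 : ℝ), m r ^ 2 / ENNReal.ofReal (r ^ (1 + 2 * s))) ^ (1 / 2 : ℝ)) := by
  have hsq : ∀ a b : ℝ≥0∞, (a + b) ^ 2 ≤ 4 * (a ^ 2 + b ^ 2) := by
    intro a b
    have h4 : (4 : ℝ≥0∞) = 2 ^ 2 := by norm_num
    rcases le_total a b with hab | hab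
    · calc (a + b) ^ 2 ≤ (2 * b) ^ 2 := by rw [two_mul]; gcongr
        _ = 4 * b ^ 2 := by rw [mul_pow, h4]
        _ ≤ _ := by gcongr; exact le_add_self
    · calc (a + b) ^ 2 ≤ (2 * a) ^ 2 := by rw [two_mul]; gcongr
        _ = 4 * a ^ 2 := by rw [mul_pow, h4]
        _ ≤ _ := by gcongr; exact le_self_add
  have hsqrt : ∀ a : ℝ≥0∞, (a ^ 2) ^ (1 / 2 : ℝ) = a := by
    intro a
    rw [← ENNReal.rpow_natCast, ← ENNReal.rpow_mul]
    norm_num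
  have hden : Measurable fun r : ℝ => ENNReal.ofReal (r ^ (1 + 2 * s)) :=
    ENNReal.measurable_ofReal.comp (measurable_id.pow_const _)
  have hm2 : Measurable fun r : ℝ => m r ^ 2 / ENNReal.ofReal (r ^ (1 + 2 * s)) :=
    (hm.pow_const 2).div hden
  set Iw : ℝ → ℝ≥0∞ := fun r => ∫⁻ y in Metric.ball (0 : EuclideanSpace ℝ (Fin d)) 1,
          (‖w (x + r • y) - w x‖₊ : ℝ≥0∞) with hIw
  have hle : ∫⁻ r in Set.Ioi (0 : ℝ), (∫⁻ y in Metric.ball (0 : EuclideanSpace ℝ (Fin d)) 1,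
          (‖f (x + r • y) - f x‖₊ : ℝ≥0∞)) ^ 2 / ENNReal.ofReal (r ^ (1 + 2 * s)) ≤
      2 ^ 2 * (c ^ 2 * (∫⁻ r in Set.Ioi (0 : ℝ), Iw r ^ 2 / ENNReal.ofReal (r ^ (1 + 2 * s))) +
        ∫⁻ r in Set.Ioi (0 : ℝ), m r ^ 2 / ENNReal.ofReal (r ^ (1 + 2 * s))) := by
    rw [← lintegral_const_mul' _ _ (ENNReal.pow_ne_top hc),
      ← lintegral_add_right _ hm2,
      ← lintegral_const_mul' _ _ (by simp)]
    refine setLIntegral_mono' measurableSet_Ioi fun r hr => ?_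
    have := (pow_le_pow_left' (h r hr) 2).trans (hsq _ _)
    refine (ENNReal.div_le_div_right this _).trans (le_of_eq ?_)
    rw [← mul_div_assoc, ← ENNReal.add_div, ← mul_div_assoc, mul_pow]
    norm_num [hIw]
  unfold sqFn
  have h2 := ENNReal.rpow_le_rpow hle (show (0:ℝ) ≤ 1 / 2 by norm_num)
  refine h2.trans ?_
  rw [ENNReal.mul_rpow_of_nonneg _ _ (by norm_num), hsqrt]
  refine mul_le_mul_right ((ENNReal.rpow_add_le_add_rpow _ _ (by norm_num) (by norm_num)).trans
    (le_of_eq ?_)) _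
  rw [ENNReal.mul_rpow_of_nonneg _ _ (by norm_num), hsqrt]

theorem hoelder_enorm {L p : ℝ} (hp : 0 ≤ p) {G : ℂ → ℂ}
    (hG : ∀ a b : ℂ, ‖G a - G b‖ ≤ L * ‖a - b‖ ^ p) (a b : ℂ) :
    (‖G a - G b‖₊ : ℝ≥0∞) ≤ ENNReal.ofReal L * (‖a - b‖₊ : ℝ≥0∞) ^ p := by
  rw [← enorm_eq_nnnorm, ← enorm_eq_nnnorm, ← ofReal_norm, ← ofReal_norm,
    ENNReal.ofReal_rpow_of_nonneg (norm_nonneg _) hp,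
    ← ENNReal.ofReal_mul' (Real.rpow_nonneg (norm_nonneg _) _)]
  exact ENNReal.ofReal_le_ofReal (hG a b)

theorem rpow_add_rpow_le {p : ℝ} (hp : 0 ≤ p) (a b : ℝ≥0∞) :
    a ^ p + b ^ p ≤ 2 * (a + b) ^ p := by
  rw [two_mul]
  exact add_le_add (ENNReal.rpow_le_rpow le_self_add hp) (ENNReal.rpow_le_rpow le_add_self hp)

theorem pointwise_aux (d : ℕ) {p σ s : ℝ} (hp : 0 < p) (hp1 : p < 1) (hσ : 0 < σ) (hs : 0 < s)
    (hsσp : s < σ * p) {L : ℝ} {G : ℂ → ℂ} (hG : ∀ a b : ℂ, ‖G a - G b‖ ≤ L * ‖a - b‖ ^ p)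
    {u v w : EuclideanSpace ℝ (Fin d) → ℂ} (hu : Measurable u) (hv : Measurable v)
    (hw : Measurable w) {x : EuclideanSpace ℝ (Fin d)}
    (hx : (‖v x‖₊ : ℝ≥0∞) ≤ maxFn d (fun z => (‖v z‖₊ : ℝ≥0∞)) x) :
    sqFn d s (fun z => w z * (G (u z + v z) - G (u z))) x ≤
      2 * (ENNReal.ofReal L * (‖v x‖₊ : ℝ≥0∞) ^ p * sqFn d s w x +
        (ENNReal.ofReal (1 / (2 * σ * p - 2 * s) + 1 / (2 * s))) ^ (1 / 2 : ℝ) *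
        ((2 * ENNReal.ofReal L * (volume (Metric.ball (0 : EuclideanSpace ℝ (Fin d)) 1) *
            maxFn d (fun z => (‖w z‖₊ : ℝ≥0∞) ^ (1 / (1 - p))) x) ^ (1 - p)) *
          ((2 * volume (Metric.ball (0 : EuclideanSpace ℝ (Fin d)) 1) *
              maxFn d (fun z => (‖v z‖₊ : ℝ≥0∞)) x) ^ (p - s / σ) *
            (ENNReal.ofReal (2 ^ d * 2 ^ ((1 + 2 * σ) / 2)) *
              (sqFn d σ (fun z => u z + v z) x + sqFn d σ u x)) ^ (s / σ)))) := by
  set V := volume (Metric.ball (0 : EuclideanSpace ℝ (Fin d)) 1) with hV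
  set Mw := maxFn d (fun z => (‖w z‖₊ : ℝ≥0∞) ^ (1 / (1 - p))) x with hMw
  set Mv := maxFn d (fun z => (‖v z‖₊ : ℝ≥0∞)) x with hMv
  set K := ENNReal.ofReal (2 ^ d * 2 ^ ((1 + 2 * σ) / 2)) with hK
  set A := 2 * ENNReal.ofReal L * (V * Mw) ^ (1 - p) with hA
  set N := 2 * V * Mv with hN
  set D := K * (sqFn d σ (fun z => u z + v z) x + sqFn d σ u x) with hD
  have hc : ENNReal.ofReal L * (‖v x‖₊ : ℝ≥0∞) ^ p ≠ ∞ :=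
    ENNReal.mul_ne_top ENNReal.ofReal_ne_top
      (ENNReal.rpow_ne_top_of_nonneg hp.le ENNReal.coe_ne_top)
  have hm : Measurable fun r : ℝ => A * (min N (ENNReal.ofReal (r ^ σ) * D)) ^ p :=
    ((measurable_const.min ((ENNReal.measurable_ofReal.comp
      (measurable_id.pow_const σ)).mul_const D)).pow_const p).const_mul A
  refine (sqFn_le_of_scale_le d s _ w x hc hm ?_).trans ?_
  · intro r hr
    have hφ : Measurable (fun y : EuclideanSpace ℝ (Fin d) => x + r • y) := by fun_prop
    have hum : Measurable fun y : EuclideanSpace ℝ (Fin d) =>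
        (‖u (x + r • y) - u x‖₊ : ℝ≥0∞) :=
      ((hu.comp hφ).sub_const _).nnnorm.coe_nnreal_ennreal
    have hwm : Measurable fun y : EuclideanSpace ℝ (Fin d) =>
        ENNReal.ofReal L * (‖v x‖₊ : ℝ≥0∞) ^ p * (‖w (x + r • y) - w x‖₊ : ℝ≥0∞) :=
      ((hw.comp hφ).sub_const _).nnnorm.coe_nnreal_ennreal.const_mul _
    -- the product rule for differences
    have hprod : ∀ z, (‖w z * (G (u z + v z) - G (u z)) -
        w x * (G (u x + v x) - G (u x))‖₊ : ℝ≥0∞) ≤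
        ENNReal.ofReal L * (‖v x‖₊ : ℝ≥0∞) ^ p * (‖w z - w x‖₊ : ℝ≥0∞) +
        (‖w z‖₊ : ℝ≥0∞) *
          (‖(G (u z + v z) - G (u z)) - (G (u x + v x) - G (u x))‖₊ : ℝ≥0∞) := by
      intro z
      have e : w z * (G (u z + v z) - G (u z)) - w x * (G (u x + v x) - G (u x)) =
          (G (u x + v x) - G (u x)) * (w z - w x) +
          w z * ((G (u z + v z) - G (u z)) - (G (u x + v x) - G (u x))) := by ring
      rw [e]
      refine (ENNReal.coe_le_coe.2 (nnnorm_add_le _ _)).trans ?_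
      rw [ENNReal.coe_add, nnnorm_mul, nnnorm_mul, ENNReal.coe_mul, ENNReal.coe_mul]
      have := hoelder_enorm hp.le hG (u x + v x) (u x)
      rw [add_sub_cancel_left] at this
      gcongr
    -- a bound on the increment of `G ∘ (u + v) - G ∘ u` turns into a bound at the scale `r`
    have hscale : ∀ (g : EuclideanSpace ℝ (Fin d) → ℝ≥0∞) (T : ℝ≥0∞), Measurable g →
        (∀ z, (‖(G (u z + v z) - G (u z)) - (G (u x + v x) - G (u x))‖₊ : ℝ≥0∞) ≤
          2 * ENNReal.ofReal L * g z ^ p) →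
        ∫⁻ y in Metric.ball (0 : EuclideanSpace ℝ (Fin d)) 1, g (x + r • y) ≤ T →
        ∫⁻ y in Metric.ball (0 : EuclideanSpace ℝ (Fin d)) 1, (‖w (x + r • y)‖₊ : ℝ≥0∞) *
          (‖(G (u (x + r • y) + v (x + r • y)) - G (u (x + r • y))) -
            (G (u x + v x) - G (u x))‖₊ : ℝ≥0∞) ≤ A * T ^ p := by
      intro g T hg hbd hT
      calc _ ≤ ∫⁻ y in Metric.ball (0 : EuclideanSpace ℝ (Fin d)) 1, 2 * ENNReal.ofReal L *
            ((‖w (x + r • y)‖₊ : ℝ≥0∞) * g (x + r • y) ^ p) := by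
              refine lintegral_mono fun y => ?_
              rw [mul_left_comm]
              exact mul_le_mul_right (hbd _) _
        _ ≤ 2 * ENNReal.ofReal L * ((V * Mw) ^ (1 - p) * T ^ p) := by
              rw [lintegral_const_mul' _ _ (ENNReal.mul_ne_top (by simp) ENNReal.ofReal_ne_top)]
              refine mul_le_mul_right ((lintegral_mul_rpow_le d hp hp1
                (W := fun z => (‖w z‖₊ : ℝ≥0∞)) hw.nnnorm.coe_nnreal_ennreal hg x hr).trans ?_) _
              exact mul_le_mul_right (ENNReal.rpow_le_rpow hT hp.le) _
        _ = _ := by rw [← mul_assoc]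
    have hN1 := hscale (fun z => (‖v z‖₊ : ℝ≥0∞) + (‖v x‖₊ : ℝ≥0∞)) N
      (hv.nnnorm.coe_nnreal_ennreal.add_const _) (by
        intro z
        have h1 := hoelder_enorm hp.le hG (u z + v z) (u z)
        have h2 := hoelder_enorm hp.le hG (u x + v x) (u x)
        rw [add_sub_cancel_left] at h1 h2
        refine (ENNReal.coe_le_coe.2 (nnnorm_sub_le _ _)).trans ?_
        rw [ENNReal.coe_add]
        refine (add_le_add h1 h2).trans ?_
        rw [← mul_add, mul_comm 2, mul_assoc]
        exact mul_le_mul_right (rpow_add_rpow_le hp.le _ _) _) (by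
        rw [lintegral_add_right _ measurable_const, setLIntegral_const, hN, mul_assoc, two_mul]
        refine add_le_add (lintegral_ball_comp_le_maxFn d (fun z => (‖v z‖₊ : ℝ≥0∞)) x hr) ?_
        rw [mul_comm]
        exact mul_le_mul_right hx _)
    have hN2 := hscale (fun z => (‖(u z + v z) - (u x + v x)‖₊ : ℝ≥0∞) + (‖u z - u x‖₊ : ℝ≥0∞))
      (ENNReal.ofReal (r ^ σ) * D)
      (((hu.add hv).sub_const _).nnnorm.coe_nnreal_ennreal.add
        (hu.sub_const _).nnnorm.coe_nnreal_ennreal) (by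
        intro z
        have h1 := hoelder_enorm hp.le hG (u z + v z) (u x + v x)
        have h2 := hoelder_enorm hp.le hG (u z) (u x)
        have e : (G (u z + v z) - G (u z)) - (G (u x + v x) - G (u x)) =
          (G (u z + v z) - G (u x + v x)) - (G (u z) - G (u x)) := by ring
        rw [e]
        refine (ENNReal.coe_le_coe.2 (nnnorm_sub_le _ _)).trans ?_
        rw [ENNReal.coe_add]
        refine (add_le_add h1 h2).trans ?_
        rw [← mul_add, mul_comm 2, mul_assoc]
        exact mul_le_mul_right (rpow_add_rpow_le hp.le _ _) _) (by
        rw [lintegral_add_right _ hum, hD,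
          mul_left_comm, mul_add, mul_add]
        exact add_le_add (lintegral_diff_le_sqFn d σ hσ (fun z => u z + v z) x hr)
          (lintegral_diff_le_sqFn d σ hσ u x hr))
    refine (lintegral_mono fun y => hprod (x + r • y)).trans ?_
    rw [lintegral_add_left hwm, lintegral_const_mul' _ _ hc]
    refine add_le_add le_rfl ?_
    rcases le_total N (ENNReal.ofReal (r ^ σ) * D) with h | h
    · rw [min_eq_left h]; exact hN1
    · rw [min_eq_right h]; exact hN2
  · have h2 := ENNReal.rpow_le_rpow (lintegral_mul_min_le p σ s hp hσ hs hsσp A N D)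
      (show (0:ℝ) ≤ 1 / 2 by norm_num)
    rw [ENNReal.mul_rpow_of_nonneg _ _ (by norm_num),
      ← ENNReal.rpow_natCast (A * _), ← ENNReal.rpow_mul] at h2
    norm_num at h2 ⊢
    gcongr

/-- Pointwise square-function estimate for Hölder nonlinearities. -/
theorem pointwise_sq_estimate (d : ℕ) (hd : 1 ≤ d) (p σ s : ℝ)
    (hp : 0 < p) (hp1 : p < 1) (hσ : 0 < σ) (hσ1 : σ < 1) (hs : 0 < s) (hsσp : s < σ * p) :
    ∃ C : ℝ, 0 < C ∧
      ∀ (L : ℝ) (G : ℂ → ℂ), (∀ a b : ℂ, ‖G a - G b‖ ≤ L * ‖a - b‖ ^ p) →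
      ∀ (u v w : EuclideanSpace ℝ (Fin d) → ℂ),
        Measurable u → Measurable v → Measurable w →
        ∀ᵐ x ∂(volume : Measure (EuclideanSpace ℝ (Fin d))),
          sqFn d s (fun z => w z * (G (u z + v z) - G (u z))) x ≤
            ENNReal.ofReal (C * L) *
              (sqFn d s w x * (‖v x‖₊ : ℝ≥0∞) ^ p +
               (maxFn d (fun z => (‖w z‖₊ : ℝ≥0∞) ^ (1 / (1 - p))) x) ^ (1 - p) *
                 (maxFn d (fun z => (‖v z‖₊ : ℝ≥0∞)) x) ^ (p - s / σ) *
                 (sqFn d σ (fun z => u z + v z) x + sqFn d σ u x) ^ (s / σ)) := by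
  have hsσ : 0 < p - s / σ := by rw [sub_pos, div_lt_iff₀ hσ]; linarith
  have hsσ0 : 0 < s / σ := by positivity
  have h1p : 0 < 1 - p := by linarith
  set V := volume (Metric.ball (0 : EuclideanSpace ℝ (Fin d)) 1) with hV
  have hVt : V ≠ ∞ := measure_ball_lt_top.ne
  set κ := (ENNReal.ofReal (1 / (2 * σ * p - 2 * s) + 1 / (2 * s))) ^ (1 / 2 : ℝ) with hκ
  set K := ENNReal.ofReal (2 ^ d * 2 ^ ((1 + 2 * σ) / 2)) with hK
  set B : ℝ≥0∞ := κ * (2 * V ^ (1 - p) * ((2 * V) ^ (p - s / σ) * K ^ (s / σ))) with hB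
  have hBt : B ≠ ∞ := by
    have e1 : κ ≠ ∞ := ENNReal.rpow_ne_top_of_nonneg (by norm_num) ENNReal.ofReal_ne_top
    have e2 : V ^ (1 - p) ≠ ∞ := ENNReal.rpow_ne_top_of_nonneg h1p.le hVt
    have e3 : (2 * V) ^ (p - s / σ) ≠ ∞ :=
      ENNReal.rpow_ne_top_of_nonneg hsσ.le (ENNReal.mul_ne_top (by simp) hVt)
    have e4 : K ^ (s / σ) ≠ ∞ := ENNReal.rpow_ne_top_of_nonneg hsσ0.le ENNReal.ofReal_ne_top
    exact ENNReal.mul_ne_top e1 (ENNReal.mul_ne_top (ENNReal.mul_ne_top (by simp) e2)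
      (ENNReal.mul_ne_top e3 e4))
  refine ⟨2 * (1 + B.toReal), by positivity, ?_⟩
  intro L G hG u v w hu hv hw
  filter_upwards [ae_le_maxFn d hd (fun z => (‖v z‖₊ : ℝ≥0∞)) hv.nnnorm.coe_nnreal_ennreal
    fun _ => ENNReal.coe_ne_top] with x hx
  refine (pointwise_aux d hp hp1 hσ hs hsσp hG hu hv hw hx).trans ?_
  have hC : ENNReal.ofReal (2 * (1 + B.toReal)) = 2 * (1 + B) := by
    rw [ENNReal.ofReal_mul (by norm_num), ENNReal.ofReal_add (by norm_num) ENNReal.toReal_nonneg,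
      ENNReal.ofReal_toReal hBt, ENNReal.ofReal_one, ENNReal.ofReal_ofNat]
  rw [ENNReal.ofReal_mul (p := 2 * (1 + B.toReal)) (by positivity), hC, ← hV, ← hκ, ← hK,
    ENNReal.mul_rpow_of_nonneg V _ h1p.le, ENNReal.mul_rpow_of_nonneg (2 * V) _ hsσ.le,
    ENNReal.mul_rpow_of_nonneg K _ hsσ0.le]
  generalize maxFn d (fun z => (‖w z‖₊ : ℝ≥0∞) ^ (1 / (1 - p))) x ^ (1 - p) = X
  generalize maxFn d (fun z => (‖v z‖₊ : ℝ≥0∞)) x ^ (p - s / σ) = Y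
  generalize (sqFn d σ (fun z => u z + v z) x + sqFn d σ u x) ^ (s / σ) = Z
  generalize (‖v x‖₊ : ℝ≥0∞) ^ p = a
  generalize sqFn d s w x = S
  generalize ENNReal.ofReal L = l
  calc _ = 2 * l * (1 * (S * a) + B * (X * Y * Z)) := by rw [hB]; ring
    _ ≤ 2 * l * ((1 + B) * (S * a) + (1 + B) * (X * Y * Z)) := by
        gcongr
        · exact le_self_add
        · exact le_add_self
    _ = _ := by ring
end

section
/- Small-radii estimate: Let d ≥ 1, 0 < p < 1, σ > 0, and 0 < s < σp, and let u, v, w : ℝ^d → ℂ be measurable. Then there is a constant C = C(d, p, s, σ) such that for almost every x ∈ ℝ^d and every A > 0, ∫_0^A ( ∫_{|y|<1} |w(x+ry)| · ( |(u+v)(x+ry) − (u+v)(x)|^p + |u(x+ry) − u(x)|^p ) dy )^2 dr / r^{1+2s} ≤ C · ( M(|w|^{1/(1−p)})(x) )^{2(1−p)} · A^{2(σp − s)} · ( D_σ(u+v)(x) + D_σ(u)(x) )^{2p}. -/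
/-!
The estimate comes from two applications of Hölder's inequality with the exponents `1 / p` and
`1 / (1 - p)`, and it holds at every point `x`, not merely almost every one. Write
`F_f(r) = ∫_{|y|<1} |f(x+ry) - f(x)| dy` and `G = F_{u+v} + F_u`.

On the unit ball, Hölder separates the weight from the differences:
the inner integral is at most `2 (∫_{|y|<1} |w(x+ry)|^{1/(1-p)} dy)^{1-p} G(r)^p`, and by
scaling the first factor is controlled by the maximal function, uniformly in `r`
(`lintegral_ball_le_maxFn`, `inner_le`).

In the radial variable, `G^{2p} / r^{1+2s} = (G^2 / r^{1+2σ})^p (r^{β-1})^{1-p}` with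
`β = 2(σp - s)/(1-p) > 0`. Hölder bounds the integral by `(∫ G^2 / r^{1+2σ})^p` times
`(A^β / β)^{1-p}`, and `A^{β(1-p)} = A^{2(σp-s)}` (`radial_holder`). The first factor is controlled
by the square functions through `(a+b)^2 ≤ 4(a^2+b^2)` (`lintegral_add_sq_le`).
-/

open MeasureTheory ENNReal

/-- The integral of `g` over the rescaled unit ball at `x` is `|B(0,1)|` times an average of `g`
over `B(x,r)`. -/
lemma lintegral_ball_le_maxFn (d : ℕ) (g : EuclideanSpace ℝ (Fin d) → ℝ≥0∞) (hg : Measurable g)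
    (x : EuclideanSpace ℝ (Fin d)) (r : ℝ) (hr : 0 < r) :
    ∫⁻ y in Metric.ball (0 : EuclideanSpace ℝ (Fin d)) 1, g (x + r • y) ≤
      volume (Metric.ball (0 : EuclideanSpace ℝ (Fin d)) 1) * maxFn d g x := by
  set V := volume (Metric.ball (0 : EuclideanSpace ℝ (Fin d)) 1) with hV
  have hV0 : V ≠ 0 := (Metric.measure_ball_pos volume _ one_pos).ne'
  have hVt : V ≠ ⊤ := measure_ball_lt_top.ne
  have hind : Measurable ((Metric.ball x r).indicator g) := hg.indicator measurableSet_ball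
  have hmem (y : EuclideanSpace ℝ (Fin d)) :
      x + r • y ∈ Metric.ball x r ↔ y ∈ Metric.ball (0 : EuclideanSpace ℝ (Fin d)) 1 := by
    simp only [Metric.mem_ball, dist_self_add_left, dist_zero_right, norm_smul, Real.norm_eq_abs,
      abs_of_pos hr]
    constructor
    · intro h
      by_contra! h1
      nlinarith
    · intro h
      nlinarith
  have h1 : ∫⁻ y in Metric.ball (0 : EuclideanSpace ℝ (Fin d)) 1, g (x + r • y) =
      ∫⁻ y, (Metric.ball x r).indicator g (x + r • y) := by
    rw [← lintegral_indicator measurableSet_ball]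
    refine lintegral_congr fun y => ?_
    by_cases hy : y ∈ Metric.ball (0 : EuclideanSpace ℝ (Fin d)) 1
    · rw [Set.indicator_of_mem hy, Set.indicator_of_mem ((hmem y).2 hy)]
    · rw [Set.indicator_of_notMem hy, Set.indicator_of_notMem (fun h => hy ((hmem y).1 h))]
  have h2 : ∫⁻ y, (Metric.ball x r).indicator g (x + r • y) =
      ENNReal.ofReal (r ^ d)⁻¹ * ∫⁻ z in Metric.ball x r, g z := by
    have h3 : ∫⁻ y, (Metric.ball x r).indicator g (x + r • y) =
        ∫⁻ z, (Metric.ball x r).indicator g (x + z)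
          ∂(Measure.map (fun y : EuclideanSpace ℝ (Fin d) => r • y) volume) := by
      rw [lintegral_map (by fun_prop) (by fun_prop)]
    rw [h3, Measure.map_addHaar_smul volume hr.ne', lintegral_smul_measure,
      lintegral_add_left_eq_self (fun z => (Metric.ball x r).indicator g z) x,
      lintegral_indicator measurableSet_ball, finrank_euclideanSpace_fin,
      abs_of_pos (by positivity), smul_eq_mul]
  have h4 : ENNReal.ofReal (r ^ d)⁻¹ = V * (volume (Metric.ball x r))⁻¹ := by
    have hrd : 0 < r ^ d := by positivity
    rw [Measure.addHaar_ball_of_pos volume x hr, finrank_euclideanSpace_fin,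
      ENNReal.mul_inv (Or.inr hVt) (Or.inr hV0), mul_comm, mul_assoc,
      ENNReal.inv_mul_cancel hV0 hVt, mul_one, ENNReal.ofReal_inv_of_pos hrd]
  rw [h1, h2, h4, mul_assoc]
  gcongr
  exact le_iSup₂_of_le r hr le_rfl

lemma lintegral_Ioc_rpow (A b : ℝ) (hA : 0 < A) (hb : 0 < b) :
    ∫⁻ r in Set.Ioc (0 : ℝ) A, ENNReal.ofReal (r ^ (b - 1)) = ENNReal.ofReal (A ^ b / b) := by
  have hi : IntervalIntegrable (fun r : ℝ => r ^ (b - 1)) volume 0 A :=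
    intervalIntegral.intervalIntegrable_rpow' (by linarith)
  rw [← ofReal_integral_eq_lintegral_ofReal
    ((intervalIntegrable_iff_integrableOn_Ioc_of_le hA.le).1 hi),
    ← intervalIntegral.integral_of_le hA.le, integral_rpow (Or.inl (by linarith))]
  · simp [Real.zero_rpow hb.ne']
  · filter_upwards [ae_restrict_mem measurableSet_Ioc] with r hr
    exact Real.rpow_nonneg hr.1.le _

/-- Hölder's inequality in the radial variable, with exponents `1 / p` and `1 / (1 - p)`. -/
lemma radial_holder (p σ s A : ℝ) (hp : 0 < p) (hp1 : p < 1) (hsσp : s < σ * p) (hA : 0 < A)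
    (G : ℝ → ℝ≥0∞) (hG : Measurable G) :
    ∫⁻ r in Set.Ioc (0 : ℝ) A, G r ^ (2 * p) / ENNReal.ofReal (r ^ (1 + 2 * s)) ≤
      (∫⁻ r in Set.Ioi (0 : ℝ), G r ^ 2 / ENNReal.ofReal (r ^ (1 + 2 * σ))) ^ p *
        (ENNReal.ofReal (1 / (2 * (σ * p - s) / (1 - p))) ^ (1 - p) *
          ENNReal.ofReal (A ^ (2 * (σ * p - s)))) := by
  have hq : 0 < 1 - p := by linarith
  set b := 2 * (σ * p - s) / (1 - p) with hb
  have hb0 : 0 < b := div_pos (by linarith) hq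
  have hbq : b * (1 - p) = 2 * (σ * p - s) := by rw [hb]; field_simp
  calc ∫⁻ r in Set.Ioc (0 : ℝ) A, G r ^ (2 * p) / ENNReal.ofReal (r ^ (1 + 2 * s))
      = ∫⁻ r in Set.Ioc (0 : ℝ) A, (G r ^ 2 / ENNReal.ofReal (r ^ (1 + 2 * σ))) ^ p *
          ENNReal.ofReal (r ^ (b - 1)) ^ (1 - p) := by
        refine setLIntegral_congr_fun measurableSet_Ioc fun r hr => ?_
        have hr0 : 0 < r := hr.1
        rw [ENNReal.div_rpow_of_nonneg _ _ hp.le, ← ENNReal.rpow_natCast, ← ENNReal.rpow_mul,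
          ENNReal.ofReal_rpow_of_pos (by positivity), ENNReal.ofReal_rpow_of_pos (by positivity),
          ← Real.rpow_mul hr0.le, ← Real.rpow_mul hr0.le, div_eq_mul_inv, div_eq_mul_inv,
          mul_assoc, ← ENNReal.ofReal_inv_of_pos (by positivity),
          ← ENNReal.ofReal_inv_of_pos (by positivity), ← ENNReal.ofReal_mul (by positivity),
          ← Real.rpow_neg hr0.le, ← Real.rpow_neg hr0.le, ← Real.rpow_add hr0]
        congr 3
        linear_combination -hbq
    _ ≤ (∫⁻ r in Set.Ioc (0 : ℝ) A, G r ^ 2 / ENNReal.ofReal (r ^ (1 + 2 * σ))) ^ p *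
          (∫⁻ r in Set.Ioc (0 : ℝ) A, ENNReal.ofReal (r ^ (b - 1))) ^ (1 - p) :=
        ENNReal.lintegral_mul_norm_pow_le (by fun_prop) (by fun_prop) hp.le hq.le (by ring)
    _ ≤ _ := by
        have e : ENNReal.ofReal (A ^ b / b) ^ (1 - p) =
            ENNReal.ofReal (1 / b) ^ (1 - p) * ENNReal.ofReal (A ^ (2 * (σ * p - s))) := by
          rw [div_eq_mul_one_div, mul_comm, ENNReal.ofReal_mul (by positivity),
            ENNReal.mul_rpow_of_nonneg _ _ hq.le, ENNReal.ofReal_rpow_of_pos (x := A ^ b)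
            (by positivity), ← Real.rpow_mul hA.le, hbq]
        rw [lintegral_Ioc_rpow A b hA hb0, e]
        gcongr
        exact Set.Ioc_subset_Ioi_self

lemma ennreal_add_sq_le (a b : ℝ≥0∞) : (a + b) ^ 2 ≤ 4 * (a ^ 2 + b ^ 2) := by
  rcases le_total a b with h | h
  · calc (a + b) ^ 2 ≤ (b + b) ^ 2 := by gcongr
      _ = 4 * b ^ 2 := by ring
      _ ≤ _ := by gcongr; exact le_add_self
  · calc (a + b) ^ 2 ≤ (a + a) ^ 2 := by gcongr
      _ = 4 * a ^ 2 := by ring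
      _ ≤ _ := by gcongr; exact le_self_add

/-- The inner integral of the square function `D_σ f(x)`, as a function of the radius `r`. -/
noncomputable def innerFn (d : ℕ) (f : EuclideanSpace ℝ (Fin d) → ℂ)
    (x : EuclideanSpace ℝ (Fin d)) (r : ℝ) : ℝ≥0∞ :=
  ∫⁻ y in Metric.ball (0 : EuclideanSpace ℝ (Fin d)) 1, (‖f (x + r • y) - f x‖₊ : ℝ≥0∞)

lemma measurable_innerFn (d : ℕ) (f : EuclideanSpace ℝ (Fin d) → ℂ) (hf : Measurable f)
    (x : EuclideanSpace ℝ (Fin d)) : Measurable (innerFn d f x) := by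
  unfold innerFn
  refine Measurable.lintegral_prod_right'
    (f := fun q : ℝ × EuclideanSpace ℝ (Fin d) => (‖f (x + q.1 • q.2) - f x‖₊ : ℝ≥0∞)) ?_
  have : Measurable fun q : ℝ × EuclideanSpace ℝ (Fin d) => f (x + q.1 • q.2) :=
    hf.comp (by fun_prop)
  fun_prop

lemma sqFn_sq (d : ℕ) (s : ℝ) (f : EuclideanSpace ℝ (Fin d) → ℂ)
    (x : EuclideanSpace ℝ (Fin d)) :
    ∫⁻ r in Set.Ioi (0 : ℝ), innerFn d f x r ^ 2 / ENNReal.ofReal (r ^ (1 + 2 * s)) =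
      sqFn d s f x ^ 2 := by
  unfold sqFn innerFn
  rw [← ENNReal.rpow_natCast, ← ENNReal.rpow_mul]
  norm_num

lemma lintegral_add_sq_le (d : ℕ) (σ : ℝ) (f g : EuclideanSpace ℝ (Fin d) → ℂ)
    (hf : Measurable f) (x : EuclideanSpace ℝ (Fin d)) :
    ∫⁻ r in Set.Ioi (0 : ℝ), (innerFn d f x r + innerFn d g x r) ^ 2 /
        ENNReal.ofReal (r ^ (1 + 2 * σ)) ≤
      4 * (sqFn d σ f x + sqFn d σ g x) ^ 2 := by
  have hF := measurable_innerFn d f hf x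
  calc _ ≤ ∫⁻ r in Set.Ioi (0 : ℝ), 4 *
          (innerFn d f x r ^ 2 / ENNReal.ofReal (r ^ (1 + 2 * σ)) +
            innerFn d g x r ^ 2 / ENNReal.ofReal (r ^ (1 + 2 * σ))) := by
        refine lintegral_mono fun r => ?_
        rw [← ENNReal.add_div, ← mul_div_assoc]
        gcongr
        exact ennreal_add_sq_le _ _
    _ = 4 * (sqFn d σ f x ^ 2 + sqFn d σ g x ^ 2) := by
        rw [lintegral_const_mul' _ _ (by norm_num), lintegral_add_left (by fun_prop),
          sqFn_sq, sqFn_sq]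
    _ ≤ _ := by
        gcongr
        rw [add_sq]
        exact add_le_add_left le_self_add _

/-- Hölder's inequality on the unit ball, for a fixed radius: the weight `w` contributes only
through the maximal function, uniformly in `r`. -/
lemma inner_le (d : ℕ) (p : ℝ) (hp : 0 < p) (hp1 : p < 1)
    (f g w : EuclideanSpace ℝ (Fin d) → ℂ) (hf : Measurable f) (hg : Measurable g)
    (hw : Measurable w) (x : EuclideanSpace ℝ (Fin d)) (r : ℝ) (hr : 0 < r) :
    ∫⁻ y in Metric.ball (0 : EuclideanSpace ℝ (Fin d)) 1,
        (‖w (x + r • y)‖₊ : ℝ≥0∞) *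
          ((‖f (x + r • y) - f x‖₊ : ℝ≥0∞) ^ p + (‖g (x + r • y) - g x‖₊ : ℝ≥0∞) ^ p) ≤
      2 * ((volume (Metric.ball (0 : EuclideanSpace ℝ (Fin d)) 1) *
        maxFn d (fun z => (‖w z‖₊ : ℝ≥0∞) ^ (1 / (1 - p))) x) ^ (1 - p) *
          (innerFn d f x r + innerFn d g x r) ^ p) := by
  have hq : 0 < 1 - p := by linarith
  have hT : Measurable fun y : EuclideanSpace ℝ (Fin d) => x + r • y := by fun_prop
  have hf' : Measurable fun y => f (x + r • y) := hf.comp hT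
  have hg' : Measurable fun y => g (x + r • y) := hg.comp hT
  have hw' : Measurable fun y => w (x + r • y) := hw.comp hT
  calc _ ≤ ∫⁻ y in Metric.ball (0 : EuclideanSpace ℝ (Fin d)) 1,
        2 * (((‖w (x + r • y)‖₊ : ℝ≥0∞) ^ (1 / (1 - p))) ^ (1 - p) *
          ((‖f (x + r • y) - f x‖₊ : ℝ≥0∞) + (‖g (x + r • y) - g x‖₊ : ℝ≥0∞)) ^ p) := by
        refine lintegral_mono fun y => ?_
        rw [← ENNReal.rpow_mul, one_div_mul_cancel hq.ne', ENNReal.rpow_one, mul_left_comm,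
          two_mul]
        gcongr
        · exact le_self_add
        · exact le_add_self
    _ = 2 * ∫⁻ y in Metric.ball (0 : EuclideanSpace ℝ (Fin d)) 1,
        (((‖w (x + r • y)‖₊ : ℝ≥0∞) ^ (1 / (1 - p))) ^ (1 - p) *
          ((‖f (x + r • y) - f x‖₊ : ℝ≥0∞) + (‖g (x + r • y) - g x‖₊ : ℝ≥0∞)) ^ p) :=
        lintegral_const_mul' _ _ (by norm_num)
    _ ≤ 2 * ((∫⁻ y in Metric.ball (0 : EuclideanSpace ℝ (Fin d)) 1,
          (‖w (x + r • y)‖₊ : ℝ≥0∞) ^ (1 / (1 - p))) ^ (1 - p) *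
        (∫⁻ y in Metric.ball (0 : EuclideanSpace ℝ (Fin d)) 1,
          ((‖f (x + r • y) - f x‖₊ : ℝ≥0∞) + (‖g (x + r • y) - g x‖₊ : ℝ≥0∞))) ^ p) := by
        gcongr
        exact ENNReal.lintegral_mul_norm_pow_le (by fun_prop) (by fun_prop) hq.le hp.le (by ring)
    _ ≤ _ := by
        rw [lintegral_add_left (by fun_prop)]
        unfold innerFn
        gcongr
        exact lintegral_ball_le_maxFn d (fun z => (‖w z‖₊ : ℝ≥0∞) ^ (1 / (1 - p)))
          (by fun_prop) x r hr

/-- Small-radii estimate. -/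
theorem small_radii_estimate (d : ℕ) (hd : 1 ≤ d) (p σ s : ℝ)
    (hp : 0 < p) (hp1 : p < 1) (hσ : 0 < σ) (hs : 0 < s) (hsσp : s < σ * p) :
    ∃ C : ℝ, 0 < C ∧
      ∀ (u v w : EuclideanSpace ℝ (Fin d) → ℂ),
        Measurable u → Measurable v → Measurable w →
        ∀ᵐ x ∂(volume : Measure (EuclideanSpace ℝ (Fin d))), ∀ A : ℝ, 0 < A →
          ∫⁻ r in Set.Ioc (0 : ℝ) A,
              (∫⁻ y in Metric.ball (0 : EuclideanSpace ℝ (Fin d)) 1,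
                  (‖w (x + r • y)‖₊ : ℝ≥0∞) *
                    ((‖(u (x + r • y) + v (x + r • y)) - (u x + v x)‖₊ : ℝ≥0∞) ^ p +
                     (‖u (x + r • y) - u x‖₊ : ℝ≥0∞) ^ p)) ^ 2
                / ENNReal.ofReal (r ^ (1 + 2 * s))
            ≤ ENNReal.ofReal C *
                (maxFn d (fun z => (‖w z‖₊ : ℝ≥0∞) ^ (1 / (1 - p))) x) ^ (2 * (1 - p)) *
                ENNReal.ofReal (A ^ (2 * (σ * p - s))) *
                (sqFn d σ (fun z => u z + v z) x + sqFn d σ u x) ^ (2 * p) := by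
  set V := volume (Metric.ball (0 : EuclideanSpace ℝ (Fin d)) 1)
  have hVt : V ≠ ⊤ := measure_ball_lt_top.ne
  have hq : 0 < 1 - p := by linarith
  set K : ℝ≥0∞ := 4 * V ^ (2 * (1 - p)) * 4 ^ p *
    ENNReal.ofReal (1 / (2 * (σ * p - s) / (1 - p))) ^ (1 - p) with hK
  have hKt : K ≠ ⊤ := by
    refine ENNReal.mul_ne_top (ENNReal.mul_ne_top (ENNReal.mul_ne_top (by norm_num) ?_) ?_) ?_
    · exact ENNReal.rpow_ne_top_of_nonneg (by positivity) hVt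
    · exact ENNReal.rpow_ne_top_of_nonneg hp.le (by norm_num)
    · exact ENNReal.rpow_ne_top_of_nonneg hq.le ENNReal.ofReal_ne_top
  -- With the `+ 1`, positivity of the constant does not require `K ≠ 0`.
  refine ⟨K.toReal + 1, by positivity, fun u v w hu hv hw => Filter.Eventually.of_forall
    fun x A hA => ?_⟩
  have hKC : K ≤ ENNReal.ofReal (K.toReal + 1) := by
    rw [← ENNReal.ofReal_toReal hKt]
    apply ENNReal.ofReal_le_ofReal
    rw [ENNReal.ofReal_toReal hKt]
    linarith
  have huv : Measurable fun z => u z + v z := hu.add hv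
  set M := maxFn d (fun z => (‖w z‖₊ : ℝ≥0∞) ^ (1 / (1 - p))) x
  set G : ℝ → ℝ≥0∞ := fun r => innerFn d (fun z => u z + v z) x r + innerFn d u x r with hGdef
  have hG : Measurable G := (measurable_innerFn d _ huv x).add (measurable_innerFn d u hu x)
  set D := sqFn d σ (fun z => u z + v z) x + sqFn d σ u x
  calc _ ≤ ∫⁻ r in Set.Ioc (0 : ℝ) A, (4 * V ^ (2 * (1 - p)) * M ^ (2 * (1 - p))) *
          (G r ^ (2 * p) / ENNReal.ofReal (r ^ (1 + 2 * s))) := by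
        refine setLIntegral_mono' measurableSet_Ioc fun r hr => ?_
        rw [← mul_div_assoc]
        gcongr
        calc _ ≤ (2 * ((V * M) ^ (1 - p) * G r ^ p)) ^ 2 := by
              gcongr
              exact inner_le d p hp hp1 (fun z => u z + v z) u w huv hu hw x r hr.1
          _ = _ := by
              have e (a : ℝ≥0∞) (t : ℝ) : (a ^ t) ^ 2 = a ^ (2 * t) := by
                rw [← ENNReal.rpow_natCast, ← ENNReal.rpow_mul]
                congr 1
                push_cast
                ring
              rw [mul_pow, mul_pow, e, e, ENNReal.mul_rpow_of_nonneg _ _ (by positivity)]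
              ring
    _ = (4 * V ^ (2 * (1 - p)) * M ^ (2 * (1 - p))) *
          ∫⁻ r in Set.Ioc (0 : ℝ) A, G r ^ (2 * p) / ENNReal.ofReal (r ^ (1 + 2 * s)) :=
        lintegral_const_mul _ (by fun_prop)
    _ ≤ (4 * V ^ (2 * (1 - p)) * M ^ (2 * (1 - p))) * ((4 * D ^ 2) ^ p *
        (ENNReal.ofReal (1 / (2 * (σ * p - s) / (1 - p))) ^ (1 - p) *
          ENNReal.ofReal (A ^ (2 * (σ * p - s))))) := by
        gcongr
        refine (radial_holder p σ s A hp hp1 hsσp hA G hG).trans ?_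
        gcongr
        exact lintegral_add_sq_le d σ (fun z => u z + v z) u huv x
    _ = K * M ^ (2 * (1 - p)) * ENNReal.ofReal (A ^ (2 * (σ * p - s))) * D ^ (2 * p) := by
        have e : (D ^ 2) ^ p = D ^ (2 * p) := by
          rw [← ENNReal.rpow_natCast, ← ENNReal.rpow_mul]
          norm_num
        rw [ENNReal.mul_rpow_of_nonneg _ _ hp.le, e, hK]
        ring
    _ ≤ _ := by gcongr
end

section
/- Hölder continuity of the complex derivatives of the nonlinearity F(z) = |z|^p z: Let 0 < p ≤ 1. Then there exists a constant C_p such that for all a, b ∈ ℂ: (i) | |a|^p − |b|^p | ≤ |a − b|^p, and (ii) | h(a) − h(b) | ≤ C_p · |a − b|^p, where h : ℂ → ℂ is defined by h(z) := |z|^{p−2} z² for z ≠ 0 and h(0) := 0. -/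
/-!
Put `u = a / ‖a‖`, `v = b / ‖b‖`, so that `h(a) = ‖a‖ ^ p * u ^ 2` and
`h(a) - h(b) = (‖a‖ ^ p - ‖b‖ ^ p) * u ^ 2 + ‖b‖ ^ p * (u ^ 2 - v ^ 2)`.
The first summand is controlled by the subadditivity of `t ↦ t ^ p` on `[0, ∞)`, which gives (i).
For the second, `w = ‖u - v‖ / 2` satisfies both `w ≤ 1` and `‖b‖ * w ≤ ‖a - b‖`; hence
`‖b‖ ^ p * ‖u ^ 2 - v ^ 2‖ ≤ 4 * ‖b‖ ^ p * w ≤ 4 * (‖b‖ * w) ^ p ≤ 4 * ‖a - b‖ ^ p`,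
and (ii) holds with `C = 5`.
-/

/-- `h(z) = |z|^{p-2} z²` for `z ≠ 0`, `h(0) = 0`; up to a constant this is the
Wirtinger derivative `F_{z̄}` of `F(z) = |z|^p z`. -/
noncomputable def hfun (p : ℝ) (z : ℂ) : ℂ :=
  if z = 0 then 0 else ((‖z‖ ^ (p - 2) : ℝ) : ℂ) * z ^ 2

theorem norm_rpow_le_add {p : ℝ} (hp0 : 0 < p) (hp1 : p ≤ 1) (a b : ℂ) :
    ‖a‖ ^ p ≤ ‖a - b‖ ^ p + ‖b‖ ^ p := by
  have h : ‖a‖ ≤ ‖a - b‖ + ‖b‖ := by simpa using norm_add_le (a - b) b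
  exact (Real.rpow_le_rpow (norm_nonneg _) h hp0.le).trans
    (Real.rpow_add_le_add_rpow (norm_nonneg _) (norm_nonneg _) hp0.le hp1)

theorem abs_norm_rpow_sub_le {p : ℝ} (hp0 : 0 < p) (hp1 : p ≤ 1) (a b : ℂ) :
    |‖a‖ ^ p - ‖b‖ ^ p| ≤ ‖a - b‖ ^ p := by
  have h1 := norm_rpow_le_add hp0 hp1 a b
  have h2 := norm_rpow_le_add hp0 hp1 b a
  rw [norm_sub_rev b a] at h2
  exact abs_sub_le_iff.2 ⟨by linarith, by linarith⟩

/-- Polar form of `h`. It also holds at `z = 0`, where `z / ‖z‖ = 0`. -/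
theorem hfun_eq (p : ℝ) (z : ℂ) :
    hfun p z = ((‖z‖ ^ p : ℝ) : ℂ) * (z / (‖z‖ : ℂ)) ^ 2 := by
  unfold hfun
  split_ifs with hz
  · simp [hz]
  · have h : 0 < ‖z‖ := norm_pos_iff.2 hz
    rw [Real.rpow_sub h, Real.rpow_two]
    push_cast
    ring

theorem norm_div_norm_le_one (z : ℂ) : ‖z / (‖z‖ : ℂ)‖ ≤ 1 := by
  simpa using div_self_le_one ‖z‖

theorem norm_mul_div_norm (z : ℂ) : (‖z‖ : ℂ) * (z / (‖z‖ : ℂ)) = z := by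
  rcases eq_or_ne z 0 with rfl | hz
  · simp
  · have : (‖z‖ : ℂ) ≠ 0 := by simpa using hz
    field_simp

/-- The map `z ↦ z / ‖z‖` is Lipschitz with constant `2 / ‖b‖` at `b`. -/
theorem norm_mul_norm_sub_le (a b : ℂ) :
    ‖b‖ * ‖a / (‖a‖ : ℂ) - b / (‖b‖ : ℂ)‖ ≤ 2 * ‖a - b‖ := by
  have hu := norm_div_norm_le_one a
  have ha := norm_mul_div_norm a
  have hb := norm_mul_div_norm b
  set u := a / (‖a‖ : ℂ)
  set v := b / (‖b‖ : ℂ)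
  have key : (‖b‖ : ℂ) * (u - v) = ((‖b‖ - ‖a‖ : ℝ) : ℂ) * u + (a - b) := by
    push_cast
    linear_combination ha - hb
  have h1 : ‖((‖b‖ - ‖a‖ : ℝ) : ℂ)‖ ≤ ‖a - b‖ := by
    rw [Complex.norm_real, Real.norm_eq_abs, norm_sub_rev]
    exact abs_norm_sub_norm_le b a
  calc ‖b‖ * ‖u - v‖ = ‖(‖b‖ : ℂ) * (u - v)‖ := by simp
    _ = ‖((‖b‖ - ‖a‖ : ℝ) : ℂ) * u + (a - b)‖ := by rw [key]
    _ ≤ ‖((‖b‖ - ‖a‖ : ℝ) : ℂ)‖ * ‖u‖ + ‖a - b‖ := by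
      simpa only [norm_mul] using norm_add_le (((‖b‖ - ‖a‖ : ℝ) : ℂ) * u) (a - b)
    _ ≤ ‖a - b‖ * 1 + ‖a - b‖ := by gcongr
    _ = 2 * ‖a - b‖ := by ring

/-- Hölder continuity of the complex derivatives of the nonlinearity `F(z) = |z|^p z`. -/
theorem holder_continuity_of_derivatives (p : ℝ) (hp0 : 0 < p) (hp1 : p ≤ 1) :
    ∃ C : ℝ, 0 < C ∧ ∀ a b : ℂ,
      |‖a‖ ^ p - ‖b‖ ^ p| ≤ ‖a - b‖ ^ p ∧
      ‖hfun p a - hfun p b‖ ≤ C * ‖a - b‖ ^ p := by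
  refine ⟨5, by norm_num, fun a b => ⟨abs_norm_rpow_sub_le hp0 hp1 a b, ?_⟩⟩
  rw [hfun_eq, hfun_eq]
  have hab := abs_norm_rpow_sub_le hp0 hp1 a b
  have hu := norm_div_norm_le_one a
  have hv := norm_div_norm_le_one b
  have hL := norm_mul_norm_sub_le a b
  set u := a / (‖a‖ : ℂ)
  set v := b / (‖b‖ : ℂ)
  have hb0 : 0 ≤ ‖b‖ ^ p := by positivity
  have hw1 : ‖u - v‖ / 2 ≤ 1 := by linarith [norm_sub_le u v]
  have hw : ‖b‖ ^ p * (‖u - v‖ / 2) ≤ ‖a - b‖ ^ p := by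
    calc ‖b‖ ^ p * (‖u - v‖ / 2) ≤ ‖b‖ ^ p * (‖u - v‖ / 2) ^ p := by
          gcongr
          exact Real.self_le_rpow_of_le_one (by positivity) hw1 hp1
      _ = (‖b‖ * (‖u - v‖ / 2)) ^ p :=
          (Real.mul_rpow (norm_nonneg _) (by positivity)).symm
      _ ≤ ‖a - b‖ ^ p := Real.rpow_le_rpow (by positivity) (by linarith) hp0.le
  have h2 : ‖u ^ 2 - v ^ 2‖ ≤ 4 * (‖u - v‖ / 2) := by
    rw [sq_sub_sq, norm_mul]
    have : ‖u + v‖ ≤ 2 := by linarith [norm_add_le u v]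
    nlinarith [norm_nonneg (u - v)]
  have hu2 : ‖u ^ 2‖ ≤ 1 := by
    rw [norm_pow]
    exact pow_le_one₀ (norm_nonneg _) hu
  calc ‖((‖a‖ ^ p : ℝ) : ℂ) * u ^ 2 - ((‖b‖ ^ p : ℝ) : ℂ) * v ^ 2‖
      = ‖((‖a‖ ^ p - ‖b‖ ^ p : ℝ) : ℂ) * u ^ 2 + ((‖b‖ ^ p : ℝ) : ℂ) * (u ^ 2 - v ^ 2)‖ := by
        congr 1
        push_cast
        ring
    _ ≤ |‖a‖ ^ p - ‖b‖ ^ p| * ‖u ^ 2‖ + ‖b‖ ^ p * ‖u ^ 2 - v ^ 2‖ := by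
        refine (norm_add_le _ _).trans_eq ?_
        rw [norm_mul, norm_mul, Complex.norm_real, Complex.norm_real, Real.norm_eq_abs,
          Real.norm_of_nonneg hb0]
    _ ≤ ‖a - b‖ ^ p * 1 + ‖b‖ ^ p * (4 * (‖u - v‖ / 2)) := by gcongr
    _ ≤ 5 * ‖a - b‖ ^ p := by linarith
end

section
/- Fundamental-theorem-of-calculus decomposition of the nonlinearity: Let p > 0 and define F(z) := |z|^p z for z ∈ ℂ. Then for all a, b ∈ ℂ, F(a + b) − F(a) = b · ∫_0^1 ((p+2)/2) · |a + θ b|^p dθ + conj(b) · ∫_0^1 (p/2) · h(a + θ b) dθ, where h : ℂ → ℂ is defined by h(z) := |z|^{p−2} z² for z ≠ 0 and h(0) := 0, and conj(b) denotes the complex conjugate of b. -/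
lemma norm_hfun {p : ℝ} (hp : 0 < p) (z : ℂ) : ‖hfun p z‖ = ‖z‖ ^ p := by
  unfold hfun
  split_ifs with h
  · simp [h, Real.zero_rpow hp.ne']
  · have hz : 0 < ‖z‖ := norm_pos_iff.mpr h
    rw [norm_mul, norm_pow, Complex.norm_real, Real.norm_of_nonneg (by positivity),
      ← Real.rpow_natCast, ← Real.rpow_add hz]
    norm_num

lemma continuous_hfun {p : ℝ} (hp : 0 < p) : Continuous (hfun p) := by
  rw [continuous_iff_continuousAt]
  intro z
  by_cases hz : z = 0
  · subst hz
    have h0 : hfun p 0 = 0 := by simp [hfun]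
    rw [ContinuousAt, h0, tendsto_zero_iff_norm_tendsto_zero]
    simp_rw [norm_hfun hp]
    have hc : Continuous fun z : ℂ => ‖z‖ ^ p := continuous_norm.rpow_const fun _ => Or.inr hp.le
    simpa [Real.zero_rpow hp.ne'] using hc.tendsto 0
  · have hc : ContinuousAt (fun z : ℂ => ((‖z‖ ^ (p - 2) : ℝ) : ℂ) * z ^ 2) z := by
      refine ContinuousAt.mul (Complex.continuous_ofReal.continuousAt.comp ?_) (by fun_prop)
      exact continuous_norm.continuousAt.rpow_const (Or.inl (norm_ne_zero_iff.mpr hz))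
    refine hc.congr ?_
    filter_upwards [isOpen_ne.mem_nhds hz] with w hw
    rw [hfun, if_neg hw]

/-- The chain rule for `F(z) = |z|^p z` along a line, in terms of the Wirtinger derivatives. -/
lemma hasDerivAt_norm_rpow_mul_line {p : ℝ} (hp : 0 < p) (a b : ℂ) (t : ℝ) :
    HasDerivAt (fun θ : ℝ => ((‖a + θ • b‖ ^ p : ℝ) : ℂ) * (a + θ • b))
      (b * ((((p + 2) / 2) * ‖a + t • b‖ ^ p : ℝ) : ℂ) +
        (starRingEnd ℂ) b * (((p / 2 : ℝ) : ℂ) * hfun p (a + t • b))) t := by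
  have hline : HasDerivAt (fun θ : ℝ => a + θ • b) b t := by
    simpa using ((hasDerivAt_id t).smul_const b).const_add a
  by_cases hz : a + t • b = 0
  · have hF : HasFDerivAt (fun z : ℂ => ((‖z‖ ^ p : ℝ) : ℂ) * z) (0 : ℂ →L[ℝ] ℂ)
        (a + t • b) := by
      rw [hz]
      have h1 := hasFDerivAt_norm_rpow (0 : ℂ) (show 1 < p + 1 by linarith)
      rw [hasFDerivAt_iff_isLittleO_nhds_zero] at h1 ⊢
      have hp1 : p + 1 ≠ 0 := by linarith
      refine Asymptotics.IsLittleO.of_norm_left ?_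
      refine h1.congr_left fun z => ?_
      simp only [zero_add, norm_zero, Real.zero_rpow hp1, map_zero, smul_zero, sub_zero, mul_zero,
        norm_mul, Complex.norm_real, Real.norm_of_nonneg (Real.rpow_nonneg (norm_nonneg z) p),
        zero_apply]
      rw [Real.rpow_add_one' (norm_nonneg z) hp1]
    have := hF.comp_hasDerivAt t hline
    refine this.congr_deriv ?_
    rw [hz]
    simp [hfun, Real.zero_rpow hp.ne']
  · have hpos : 0 < ‖a + t • b‖ := norm_pos_iff.mpr hz
    have hsq := hline.norm_sq
    have hpow := (hsq.rpow_const (p := p / 2) (Or.inl (by positivity))).ofReal_comp.mul hline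
    have e1 : ∀ z : ℂ, (‖z‖ ^ 2) ^ (p / 2) = ‖z‖ ^ p := fun z => by
      rw [← Real.rpow_natCast, ← Real.rpow_mul (norm_nonneg z)]
      congr 1
      push_cast
      ring
    have e2 : (‖a + t • b‖ ^ 2) ^ (p / 2 - 1) = ‖a + t • b‖ ^ (p - 2) := by
      rw [← Real.rpow_natCast, ← Real.rpow_mul (norm_nonneg _)]
      congr 1
      push_cast
      ring
    have e3 : ‖a + t • b‖ ^ p = ‖a + t • b‖ ^ (p - 2) * ‖a + t • b‖ ^ 2 := by
      rw [← Real.rpow_natCast, ← Real.rpow_add hpos]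
      norm_num
    have e4 : ((2 * inner ℝ (a + t • b) b : ℝ) : ℂ)
        = (a + t • b) * (starRingEnd ℂ) b + (starRingEnd ℂ) (a + t • b) * b := by
      apply Complex.ext <;> simp [Complex.inner] <;> ring
    have e5 : ((‖a + t • b‖ : ℝ) : ℂ) ^ 2 = (a + t • b) * (starRingEnd ℂ) (a + t • b) :=
      (Complex.mul_conj' _).symm
    simp only [e1, e2] at hpow
    refine hpow.congr_deriv ?_
    rw [hfun, if_neg hz, e3, Complex.ofReal_mul, Complex.ofReal_mul, e4]
    push_cast
    rw [e5]
    ring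

/-- Fundamental-theorem-of-calculus decomposition of the nonlinearity `F(z) = |z|^p z`. -/
theorem ftc_decomposition (p : ℝ) (hp : 0 < p) (a b : ℂ) :
    ((‖a + b‖ ^ p : ℝ) : ℂ) * (a + b) - ((‖a‖ ^ p : ℝ) : ℂ) * a =
      b * ((∫ θ in (0:ℝ)..1, ((p + 2) / 2) * ‖a + θ • b‖ ^ p : ℝ) : ℂ) +
        (starRingEnd ℂ) b * ∫ θ in (0:ℝ)..1, ((p / 2 : ℝ) : ℂ) * hfun p (a + θ • b) := by
  have hl : Continuous fun θ : ℝ => a + θ • b := by fun_prop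
  have c1 : Continuous fun θ : ℝ => b * ((((p + 2) / 2) * ‖a + θ • b‖ ^ p : ℝ) : ℂ) :=
    continuous_const.mul (Complex.continuous_ofReal.comp
      (continuous_const.mul (hl.norm.rpow_const fun _ => Or.inr hp.le)))
  have c2 : Continuous fun θ : ℝ =>
      (starRingEnd ℂ) b * (((p / 2 : ℝ) : ℂ) * hfun p (a + θ • b)) :=
    continuous_const.mul (continuous_const.mul ((continuous_hfun hp).comp hl))
  have key := intervalIntegral.integral_eq_sub_of_hasDerivAt
    (fun t (_ : t ∈ Set.uIcc (0:ℝ) 1) => hasDerivAt_norm_rpow_mul_line hp a b t)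
    ((c1.add c2).intervalIntegrable 0 1)
  rw [intervalIntegral.integral_add (c1.intervalIntegrable 0 1) (c2.intervalIntegrable 0 1),
    intervalIntegral.integral_const_mul, intervalIntegral.integral_const_mul,
    intervalIntegral.integral_ofReal] at key
  simp only [one_smul, zero_smul, add_zero] at key
  exact key.symm
end

section
/- Frequency-space mass interpolation bound (key step in precluding the frequency cascade): Let d ≥ 1, s > 0, ε > 0, R > 0, η ≥ 0, A ≥ 0, B ≥ 0, and let h : ℝ^d → ℂ be measurable. Assume ∫_{|ξ| ≤ R} |ξ|^{2s} |h(ξ)|² dξ ≤ η, ∫_{|ξ| ≤ R} |ξ|^{−2ε} |h(ξ)|² dξ ≤ A², and ∫_{ℝ^d} |ξ|^{2s} |h(ξ)|² dξ ≤ B². Then ∫_{ℝ^d} |h(ξ)|² dξ ≤ A^{2s/(s+ε)} · η^{ε/(s+ε)} + R^{−2s} · B². -/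
open MeasureTheory ENNReal

/-!
The mass is split into the low frequencies `|ξ| ≤ R` and the high frequencies `|ξ| > R`.

On the ball, with `p = s / (s + ε)` and `q = ε / (s + ε)`, so that `p + q = 1` and `-2εp + 2sq = 0`,
one has `|h|² = (|ξ|^(-2ε) |h|²)^p (|ξ|^(2s) |h|²)^q` for `ξ ≠ 0`
(`weight_interpolation`), and Hölder's inequality bounds the mass there by `(A²)^p η^q`.
Off the ball `1 ≤ R^(-2s) |ξ|^(2s)`, which gives the term `R^(-2s) B²`.
-/

/-- The weights `r^(-2ε)` and `r^(2s)` cancel when interpolated with exponents `s / (s + ε)` and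
`ε / (s + ε)`. -/
lemma weight_interpolation {s ε r : ℝ} (hs : 0 < s) (hε : 0 < ε) (hr : 0 < r) (a : ℝ≥0∞) :
    (ENNReal.ofReal (r ^ (-(2 * ε))) * a) ^ (s / (s + ε)) *
      (ENNReal.ofReal (r ^ (2 * s)) * a) ^ (ε / (s + ε)) = a := by
  have hp : 0 ≤ s / (s + ε) := by positivity
  have hq : 0 ≤ ε / (s + ε) := by positivity
  have hw : (ENNReal.ofReal (r ^ (-(2 * ε)))) ^ (s / (s + ε)) *
      (ENNReal.ofReal (r ^ (2 * s))) ^ (ε / (s + ε)) = 1 := by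
    rw [ENNReal.ofReal_rpow_of_nonneg (by positivity) hp,
      ENNReal.ofReal_rpow_of_nonneg (by positivity) hq, ← ENNReal.ofReal_mul (by positivity),
      ← Real.rpow_mul hr.le, ← Real.rpow_mul hr.le, ← Real.rpow_add hr]
    have : -(2 * ε) * (s / (s + ε)) + 2 * s * (ε / (s + ε)) = 0 := by ring
    rw [this, Real.rpow_zero, ENNReal.ofReal_one]
  have ha : a ^ (s / (s + ε)) * a ^ (ε / (s + ε)) = a := by
    rw [← ENNReal.rpow_add_of_nonneg _ _ hp hq, ← add_div, div_self (by positivity),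
      ENNReal.rpow_one]
  rw [ENNReal.mul_rpow_of_nonneg _ _ hp, ENNReal.mul_rpow_of_nonneg _ _ hq, mul_mul_mul_comm, hw,
    ha, one_mul]

/-- Frequency-space mass interpolation bound (key step in precluding the frequency cascade). -/
theorem mass_interpolation_bound (d : ℕ) (hd : 1 ≤ d) (s ε R η A B : ℝ)
    (hs : 0 < s) (hε : 0 < ε) (hR : 0 < R) (hη : 0 ≤ η) (hA : 0 ≤ A) (hB : 0 ≤ B)
    (h : EuclideanSpace ℝ (Fin d) → ℂ) (hm : Measurable h)
    (h1 : ∫⁻ ξ in Metric.closedBall (0 : EuclideanSpace ℝ (Fin d)) R,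
            ENNReal.ofReal (‖ξ‖ ^ (2 * s)) * (‖h ξ‖₊ : ℝ≥0∞) ^ 2 ≤ ENNReal.ofReal η)
    (h2 : ∫⁻ ξ in Metric.closedBall (0 : EuclideanSpace ℝ (Fin d)) R,
            ENNReal.ofReal (‖ξ‖ ^ (-(2 * ε))) * (‖h ξ‖₊ : ℝ≥0∞) ^ 2 ≤ ENNReal.ofReal (A ^ 2))
    (h3 : ∫⁻ ξ, ENNReal.ofReal (‖ξ‖ ^ (2 * s)) * (‖h ξ‖₊ : ℝ≥0∞) ^ 2 ≤ ENNReal.ofReal (B ^ 2)) :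
    ∫⁻ ξ, (‖h ξ‖₊ : ℝ≥0∞) ^ 2 ≤
      ENNReal.ofReal (A ^ (2 * s / (s + ε)) * η ^ (ε / (s + ε)) + R ^ (-(2 * s)) * B ^ 2) := by
  have : Nonempty (Fin d) := ⟨⟨0, hd⟩⟩
  have hp : 0 ≤ s / (s + ε) := by positivity
  have hq : 0 ≤ ε / (s + ε) := by positivity
  rw [ENNReal.ofReal_add (by positivity) (by positivity),
    ← lintegral_add_compl _ (Metric.isClosed_closedBall (x := (0 : EuclideanSpace ℝ (Fin d)))
      (ε := R)).measurableSet]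
  refine add_le_add ?_ ?_
  · -- The origin, where both weights take the value `0`, is a null set because `d ≥ 1`.
    have hne : ∀ᵐ ξ ∂(volume.restrict (Metric.closedBall (0 : EuclideanSpace ℝ (Fin d)) R)),
        ξ ≠ 0 := ae_restrict_of_ae (Measure.ae_ne volume 0)
    calc ∫⁻ ξ in Metric.closedBall (0 : EuclideanSpace ℝ (Fin d)) R, (‖h ξ‖₊ : ℝ≥0∞) ^ 2
        = ∫⁻ ξ in Metric.closedBall (0 : EuclideanSpace ℝ (Fin d)) R,
            (ENNReal.ofReal (‖ξ‖ ^ (-(2 * ε))) * (‖h ξ‖₊ : ℝ≥0∞) ^ 2) ^ (s / (s + ε)) *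
            (ENNReal.ofReal (‖ξ‖ ^ (2 * s)) * (‖h ξ‖₊ : ℝ≥0∞) ^ 2) ^ (ε / (s + ε)) := by
          refine lintegral_congr_ae ?_
          filter_upwards [hne] with ξ hξ
          exact (weight_interpolation hs hε (norm_pos_iff.mpr hξ) _).symm
      _ ≤ _ := ENNReal.lintegral_mul_norm_pow_le (by fun_prop) (by fun_prop) hp hq
          (by rw [← add_div, div_self (by positivity)])
      _ ≤ ENNReal.ofReal (A ^ 2) ^ (s / (s + ε)) * ENNReal.ofReal η ^ (ε / (s + ε)) := by gcongr
      _ = ENNReal.ofReal (A ^ (2 * s / (s + ε)) * η ^ (ε / (s + ε))) := by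
          rw [ENNReal.ofReal_rpow_of_nonneg (by positivity) hp,
            ENNReal.ofReal_rpow_of_nonneg hη hq, ← ENNReal.ofReal_mul (by positivity),
            ← Real.rpow_natCast A 2, ← Real.rpow_mul hA, Nat.cast_ofNat, mul_div_assoc]
  · calc ∫⁻ ξ in (Metric.closedBall (0 : EuclideanSpace ℝ (Fin d)) R)ᶜ, (‖h ξ‖₊ : ℝ≥0∞) ^ 2
        ≤ ∫⁻ ξ in (Metric.closedBall (0 : EuclideanSpace ℝ (Fin d)) R)ᶜ,
            ENNReal.ofReal (R ^ (-(2 * s))) *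
              (ENNReal.ofReal (‖ξ‖ ^ (2 * s)) * (‖h ξ‖₊ : ℝ≥0∞) ^ 2) := by
          refine setLIntegral_mono' Metric.isClosed_closedBall.measurableSet.compl fun ξ hξ => ?_
          have hξ : R < ‖ξ‖ := by simpa using hξ
          rw [← mul_assoc, ← ENNReal.ofReal_mul (by positivity)]
          refine le_mul_of_one_le_left (zero_le) ?_
          rw [ENNReal.one_le_ofReal, Real.rpow_neg hR.le, inv_mul_eq_div,
            one_le_div (by positivity)]
          gcongr
      _ ≤ ∫⁻ ξ, ENNReal.ofReal (R ^ (-(2 * s))) *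
              (ENNReal.ofReal (‖ξ‖ ^ (2 * s)) * (‖h ξ‖₊ : ℝ≥0∞) ^ 2) :=
          setLIntegral_le_lintegral _ _
      _ ≤ ENNReal.ofReal (R ^ (-(2 * s)) * B ^ 2) := by
          rw [lintegral_const_mul' _ _ ENNReal.ofReal_ne_top, ENNReal.ofReal_mul (by positivity)]
          gcongr
end

section
/- Abstract double-Duhamel bound in Hilbert space: Let H be a complex Hilbert space, let a > 2, N > 0, and K ≥ 0. Let f : (0,∞) → H and g : (−∞,0) → H be strongly measurable and Bochner integrable on every bounded subinterval, and suppose that |⟨f(t), g(τ)⟩_H| ≤ K² · min( (t − τ)^{−1}, N² )^a for all t > 0 and τ < 0. Suppose φ ∈ H is such that ∫_0^T f(t) dt converges weakly to φ as T → ∞ (i.e., ⟨∫_0^T f(t) dt, ψ⟩ → ⟨φ, ψ⟩ for every ψ ∈ H) and ∫_{T'}^0 g(τ) dτ converges weakly to φ as T' → −∞. Then ‖φ‖_H² ≤ C(a) · K² · N^{2(a−2)}, where C(a) depends only on a. -/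
open MeasureTheory Filter
open scoped InnerProductSpace

/-!
The norm `‖φ‖² = ⟪φ, φ⟫` is the iterated weak limit of `⟪∫₀ᵀ f, ∫_{T'}⁰ g⟫`, first as `T' → -∞`
with `T` fixed and then as `T → ∞`, so it suffices to bound these pairings uniformly in `T, T'`.
Moving both integrals out of the inner product leaves a double integral of `⟪f t, g τ⟫`.
With `M = (N ^ 2)⁻¹`, the kernel satisfies `min (t - τ)⁻¹ (N ^ 2) ≤ 2 / (M + t - τ)`, and
`∫_{t > 0} ∫_{τ < 0} (M + t - τ) ^ (-a) = M ^ (2 - a) / ((a - 1) (a - 2))`, where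
`M ^ (2 - a) = N ^ (2 (a - 2))`. Each of the two integrations is an instance of
`norm_inner_integral_le`, and the comparison of kernels is `min_rpow_le`.
-/

/-- One integration of a weak bound with power decay: it costs one power of the offset `c`. -/
lemma norm_inner_integral_le {H : Type*} [NormedAddCommGroup H] [InnerProductSpace ℂ H]
    [CompleteSpace H] {h : ℝ → H} {x : H} {B c p T : ℝ} (hB : 0 ≤ B) (hc : 0 < c) (hp : 1 < p)
    (hT : 0 ≤ T) (hh : IntervalIntegrable h volume 0 T)
    (hbd : ∀ s, 0 < s → ‖⟪x, h s⟫_ℂ‖ ≤ B * (c + s) ^ (-p)) :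
    ‖⟪x, ∫ s in (0:ℝ)..T, h s⟫_ℂ‖ ≤ B / (p - 1) * c ^ (-(p - 1)) := by
  have hcomm : ∫ s in (0:ℝ)..T, ⟪x, h s⟫_ℂ = ⟪x, ∫ s in (0:ℝ)..T, h s⟫_ℂ :=
    (innerSL ℂ x).intervalIntegral_comp_comm hh
  have hcont : ContinuousOn (fun s : ℝ => B * (c + s) ^ (-p)) (Set.uIcc 0 T) := by
    refine continuousOn_const.mul (ContinuousOn.rpow_const (by fun_prop) ?_)
    intro s hs
    rw [Set.uIcc_of_le hT] at hs
    exact Or.inl (by linarith [hs.1])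
  have h0 : (0:ℝ) ∉ Set.uIcc c (c + T) := by
    rw [Set.uIcc_of_le (by linarith)]
    intro h0
    linarith [h0.1]
  have hint : ∫ s in (0:ℝ)..T, B * (c + s) ^ (-p)
      = B * ((c ^ (-(p - 1)) - (c + T) ^ (-(p - 1))) / (p - 1)) := by
    rw [intervalIntegral.integral_const_mul,
      intervalIntegral.integral_comp_add_left (fun u : ℝ => u ^ (-p)), add_zero,
      integral_rpow (Or.inr ⟨by linarith, h0⟩), show -p + 1 = -(p - 1) by ring, div_neg,
      ← neg_div, neg_sub]
  rw [← hcomm]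
  calc _ ≤ ∫ s in (0:ℝ)..T, B * (c + s) ^ (-p) :=
        intervalIntegral.norm_integral_le_of_norm_le hT
          (Eventually.of_forall fun s hs => hbd s hs.1) hcont.intervalIntegrable
    _ = B * ((c ^ (-(p - 1)) - (c + T) ^ (-(p - 1))) / (p - 1)) := hint
    _ ≤ B * (c ^ (-(p - 1)) / (p - 1)) := by
        have : 0 ≤ (c + T) ^ (-(p - 1)) := by positivity
        have : 0 < p - 1 := by linarith
        gcongr
        linarith
    _ = _ := by ring

lemma min_rpow_le {u M a : ℝ} (hu : 0 < u) (hM : 0 < M) (ha : 0 ≤ a) :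
    min u⁻¹ M⁻¹ ^ a ≤ 2 ^ a * (M + u) ^ (-a) := by
  have hmin : min u⁻¹ M⁻¹ ≤ 2 * (M + u)⁻¹ := by
    rcases le_total u M with h | h
    · refine (min_le_right _ _).trans ?_
      rw [← div_eq_mul_inv, inv_eq_one_div, div_le_div_iff₀ hM (by positivity)]
      linarith
    · refine (min_le_left _ _).trans ?_
      rw [← div_eq_mul_inv, inv_eq_one_div, div_le_div_iff₀ hu (by positivity)]
      linarith
  calc _ ≤ (2 * (M + u)⁻¹) ^ a := Real.rpow_le_rpow (by positivity) hmin ha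
    _ = _ := by
      rw [Real.mul_rpow (by norm_num) (by positivity), Real.inv_rpow (by positivity),
        Real.rpow_neg (by positivity)]

/-- Abstract double-Duhamel bound in Hilbert space. -/
theorem abstract_double_duhamel (a : ℝ) (ha : 2 < a) :
    ∃ C : ℝ, 0 < C ∧
      ∀ (H : Type) [NormedAddCommGroup H] [InnerProductSpace ℂ H] [CompleteSpace H]
        (f g : ℝ → H) (K N : ℝ), 0 ≤ K → 0 < N →
        (∀ T : ℝ, IntervalIntegrable f volume 0 T) →
        (∀ T : ℝ, IntervalIntegrable g volume T 0) →
        (∀ t τ : ℝ, 0 < t → τ < 0 →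
          ‖⟪f t, g τ⟫_ℂ‖ ≤ K ^ 2 * min (t - τ)⁻¹ (N ^ 2) ^ a) →
        ∀ φ : H,
          (∀ ψ : H, Tendsto (fun T : ℝ => ⟪∫ t in (0:ℝ)..T, f t, ψ⟫_ℂ)
            atTop (nhds ⟪φ, ψ⟫_ℂ)) →
          (∀ ψ : H, Tendsto (fun T' : ℝ => ⟪∫ τ in T'..(0:ℝ), g τ, ψ⟫_ℂ)
            atBot (nhds ⟪φ, ψ⟫_ℂ)) →
          ‖φ‖ ^ 2 ≤ C * K ^ 2 * N ^ (2 * (a - 2)) := by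
  have ha1 : 0 < a - 1 := by linarith
  have ha2 : 0 < a - 2 := by linarith
  refine ⟨2 ^ a / (a - 1) / (a - 2), by positivity, ?_⟩
  intro H _ _ _ f g K N hK hN hf hg hfg φ hφf hφg
  obtain ⟨M, hMdef⟩ : ∃ M : ℝ, M = (N ^ 2)⁻¹ := ⟨_, rfl⟩
  have hM : 0 < M := by rw [hMdef]; positivity
  have hMN : M ^ (-(a - 2)) = N ^ (2 * (a - 2)) := by
    rw [hMdef, Real.inv_rpow (by positivity), Real.rpow_neg (by positivity), inv_inv,
      ← Real.rpow_natCast, ← Real.rpow_mul hN.le]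
    norm_num
  have hker : ∀ t s : ℝ, 0 < t → 0 < s →
      ‖⟪f t, g (-s)⟫_ℂ‖ ≤ K ^ 2 * 2 ^ a * ((M + t) + s) ^ (-a) := by
    intro t s ht hs
    have h1 := hfg t (-s) ht (by linarith)
    have h2 := min_rpow_le (a := a) (add_pos ht hs) hM (by linarith)
    rw [sub_neg_eq_add, ← inv_inv (N ^ 2), ← hMdef] at h1
    rw [mul_assoc, add_assoc]
    exact h1.trans (by gcongr)
  set R : ℝ := 2 ^ a / (a - 1) / (a - 2) * K ^ 2 * N ^ (2 * (a - 2)) with hR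
  have hpair : ∀ T T' : ℝ, 0 ≤ T → T' ≤ 0 →
      ‖⟪∫ τ in T'..(0:ℝ), g τ, ∫ t in (0:ℝ)..T, f t⟫_ℂ‖ ≤ R := by
    intro T T' hT hT'
    have hG : ∫ τ in T'..(0:ℝ), g τ = ∫ s in (0:ℝ)..(-T'), g (-s) := by
      rw [intervalIntegral.integral_comp_neg]
      simp
    have hgi : IntervalIntegrable (fun s => g (-s)) volume 0 (-T') := by
      simpa using ((IntervalIntegrable.iff_comp_neg (by simp)).mp (hg T')).symm
    have hin : ∀ t, 0 < t → ‖⟪∫ τ in T'..(0:ℝ), g τ, f t⟫_ℂ‖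
        ≤ K ^ 2 * 2 ^ a / (a - 1) * (M + t) ^ (-(a - 1)) := by
      intro t ht
      rw [norm_inner_symm, hG]
      exact norm_inner_integral_le (by positivity) (by positivity) (by linarith) (by linarith)
        hgi (fun s hs => hker t s ht hs)
    have := norm_inner_integral_le (by positivity) hM (by linarith) hT (hf T) hin
    rw [show -(a - 1 - 1) = -(a - 2) by ring, show a - 1 - 1 = a - 2 by ring, hMN] at this
    refine this.trans_eq ?_
    rw [hR]
    ring
  have hlim1 : ∀ T : ℝ, 0 ≤ T → ‖⟪∫ t in (0:ℝ)..T, f t, φ⟫_ℂ‖ ≤ R := by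
    intro T hT
    rw [norm_inner_symm]
    refine le_of_tendsto (hφg (∫ t in (0:ℝ)..T, f t)).norm ?_
    filter_upwards [eventually_le_atBot (0:ℝ)] with T' hT'
    exact hpair T T' hT hT'
  have hlim2 : ‖⟪φ, φ⟫_ℂ‖ ≤ R := by
    refine le_of_tendsto (hφf φ).norm ?_
    filter_upwards [eventually_ge_atTop (0:ℝ)] with T hT
    exact hlim1 T hT
  rw [inner_self_eq_norm_sq_to_K] at hlim2
  simpa using hlim2
end
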